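/- Under Condition (★), for every integer h ≥ 2, ∑_{m ∈ 𝒩_h(x)} ω(m)² = κ·γ_h·x^{1/h}·(log log x)² + κ·γ_h·(2𝔇₁ + 1)·x^{1/h}·log log x + κ·γ_h·𝔇₂·x^{1/h} + O_h(x^{1/h}·log log x/log x) as x → ∞, where the implied constant depends only on h and on the data P, N, κ, θ. -/

import Mathlib

open Filter Topology Asymptotics
open scoped Classical

noncomputable section

/-- The norm on the free abelian monoid `P →₀ ℕ`, extended multiplicatively
from the norm `N` on the prime elements. -/
def Nm {P : Type*} (N : P → ℕ) (m : P →₀ ℕ) : ℕ :=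
  m.prod fun p k => N p ^ k

/-- The number of distinct prime elements generating `m`. -/
def omegaM {P : Type*} (m : P →₀ ℕ) : ℕ := m.support.card

/-- `m` is `h`-free: every multiplicity is at most `h - 1`. -/
def HFree {P : Type*} (h : ℕ) (m : P →₀ ℕ) : Prop := ∀ p, m p ≤ h - 1

/-- `m` is `h`-full: every nonzero multiplicity is at least `h`. -/
def HFull {P : Type*} (h : ℕ) (m : P →₀ ℕ) : Prop := ∀ p, m p = 0 ∨ h ≤ m p

/-- Condition (★): `#{m : N(m) ≤ x} = κ·x + O(x^θ)` with `κ > 0`, `0 ≤ θ < 1`. -/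
def StarCond {P : Type*} (N : P → ℕ) (κ θ : ℝ) : Prop :=
  0 < κ ∧ 0 ≤ θ ∧ θ < 1 ∧
    (fun x : ℝ => (({m : P →₀ ℕ | (Nm N m : ℝ) ≤ x}.ncard : ℝ) - κ * x))
      =O[atTop] fun x : ℝ => x ^ θ

/-- The generalized zeta function `ζ_M(s) = ∑_m N(m)^{-s}`. -/
def zetaM {P : Type*} (N : P → ℕ) (s : ℝ) : ℝ :=
  ∑' m : P →₀ ℕ, 1 / (Nm N m : ℝ) ^ s

/-- The constant `γ_h`. -/
def gammah {P : Type*} (N : P → ℕ) (h : ℕ) : ℝ :=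
  ∏' p : P, (1 + ((N p : ℝ) - (N p : ℝ) ^ (1 / (h : ℝ))) /
    ((N p : ℝ) ^ 2 * ((N p : ℝ) ^ (1 / (h : ℝ)) - 1)))

/-- `A` is the Mertens constant `𝔄` of the prime system:
`𝔄 = lim (∑_{N(p) ≤ x} 1/N(p) − log log x)`. -/
def IsMertens {P : Type*} (N : P → ℕ) (A : ℝ) : Prop :=
  Tendsto (fun x : ℝ =>
      (∑ᶠ p ∈ {p : P | (N p : ℝ) ≤ x}, 1 / (N p : ℝ)) - Real.log (Real.log x))
    atTop (𝓝 A)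

/-- The constant `𝔅 = -π²/6`. -/
def Bconst : ℝ := -(Real.pi ^ 2) / 6

/-- The constant `ℭ₁`, given the Mertens constant `A`. -/
def C1const {P : Type*} (N : P → ℕ) (h : ℕ) (A : ℝ) : ℝ :=
  A - ∑' p : P, ((N p : ℝ) - 1) / ((N p : ℝ) * ((N p : ℝ) ^ h - 1))

/-- The constant `ℭ₂`, given the Mertens constant `A`. -/
def C2const {P : Type*} (N : P → ℕ) (h : ℕ) (A : ℝ) : ℝ :=
  C1const N h A ^ 2 + C1const N h A + Bconst -
    ∑' p : P, (((N p : ℝ) ^ (h - 1) - 1) / ((N p : ℝ) ^ h - 1)) ^ 2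

/-- The convergent series `𝔏_h(r)`. -/
def LhSum {P : Type*} (N : P → ℕ) (h : ℕ) (r : ℝ) : ℝ :=
  ∑' p : P, 1 / ((N p : ℝ) ^ (r / (h : ℝ) - 1) *
    ((N p : ℝ) - (N p : ℝ) ^ (1 - 1 / (h : ℝ)) + 1))

/-- The constant `𝔇₁`, given the Mertens constant `A`. -/
def D1const {P : Type*} (N : P → ℕ) (h : ℕ) (A : ℝ) : ℝ :=
  A - Real.log (h : ℝ) + LhSum N h ((h : ℝ) + 1) - LhSum N h (2 * (h : ℝ))

/-- The constant `𝔇₂`, given the Mertens constant `A`. -/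
def D2const {P : Type*} (N : P → ℕ) (h : ℕ) (A : ℝ) : ℝ :=
  D1const N h A ^ 2 + D1const N h A + Bconst -
    ∑' p : P, (1 / ((N p : ℝ) - (N p : ℝ) ^ (1 - 1 / (h : ℝ)) + 1)) ^ 2

/-- The error term `R_{S_h}(x)` for `h`-free counts. -/
def RSfree (h : ℕ) (θ : ℝ) (x : ℝ) : ℝ :=
  if 1 / (h : ℝ) < θ then x ^ θ
  else if 1 / (h : ℝ) = θ then x ^ (1 / (h : ℝ)) * Real.log x
  else x ^ (1 / (h : ℝ))

/-- The error term `R_{N_h}(x)` for `h`-full counts. -/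
def RNfull (h : ℕ) (θ : ℝ) (x : ℝ) : ℝ :=
  if (h : ℝ) / ((h : ℝ) + 1) < θ then x ^ (θ / (h : ℝ))
  else if ∃ i : ℕ, 1 ≤ i ∧ i ≤ h - 1 ∧ θ = (h : ℝ) / ((h : ℝ) + (i : ℝ)) then
    x ^ (1 / ((h : ℝ) + 1)) * Real.log x
  else x ^ (1 / ((h : ℝ) + 1))

/-!
An `h`-full element divisible by every prime in a finite set `D` is, in exactly one way, the product
of `∏_{p ∈ D} p ^ h`, an arbitrary `h`-th power, and a residual part all of whose exponents are `0`
or lie strictly between `h` and `2h` (are below `h` at the primes of `D`). Residual parts are so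
sparse that summing (★) over them converges: with `y = x ^ (1/h)` and
`f p = 1 / (N p - N p ^ (1 - 1/h) + 1)`, the number of such elements of norm at most `x` is
`κ γ_h y ∏_{p ∈ D} f p + O(y ^ τ ∏_{p ∈ D} N p ^ (-τ))` for every `τ < 1` close enough to `1`.

Expanding `ω² = ∑_{p, q ∣ m} 1` turns the second moment into `κ γ_h y` times
`∑_{N p ≤ y} f p + ∑_{N p N q ≤ y} f p f q - ∑_{N p ≤ √y} f p ²`. Chebyshev's bound, from Möbius
inversion of `log` under (★), gives Mertens' theorem `∑_{N p ≤ x} f p log N p = log x + O(1)`, and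
partial summation evaluates the first sum. The hyperbola method at `√y` reduces the double sum to
`∑_{N p ≤ √y} f p log (1 - log N p / log y)`, whose expansion in powers of `log N p / log y` tends
to `-Li₂(1/2)`; this is the source of the constant `-π²/6`.
-/

/-! ### Partial sums over sublevel sets -/

section PartialSum

open MeasureTheory

variable {ι κ : Type*} {ν w : ι → ℝ} {x y : ℝ}

/-- Every sublevel set of `ν` is finite, so that sums over `ν i ≤ x` make sense. -/
def FiniteSublevels (ν : ι → ℝ) : Prop :=
  ∀ x, {i | ν i ≤ x}.Finite

/-- The indices with `ν i ≤ x`, as a finset; it is `∅` when there are infinitely many. -/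
def sublevel (ν : ι → ℝ) (x : ℝ) : Finset ι :=
  if hfin : {i | ν i ≤ x}.Finite then hfin.toFinset else ∅

/-- The summatory function `∑_{ν i ≤ x} w i` of the weight `w`. -/
def partialSum (ν w : ι → ℝ) (x : ℝ) : ℝ :=
  ∑ i ∈ sublevel ν x, w i

lemma FiniteSublevels.mem_sublevel (hν : FiniteSublevels ν) {i : ι} :
    i ∈ sublevel ν x ↔ ν i ≤ x := by
  simp [sublevel, hν x]

lemma FiniteSublevels.sublevel_subset (hν : FiniteSublevels ν) (hxy : x ≤ y) :
    sublevel ν x ⊆ sublevel ν y := fun _ hi =>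
  hν.mem_sublevel.2 ((hν.mem_sublevel.1 hi).trans hxy)

lemma FiniteSublevels.comp_injective (hν : FiniteSublevels ν) {e : κ → ι}
    (he : Function.Injective e) : FiniteSublevels (ν ∘ e) := fun x =>
  (hν x).preimage he.injOn

lemma FiniteSublevels.partialSum_mono (hν : FiniteSublevels ν) (hw : ∀ i, 0 ≤ w i) :
    Monotone (partialSum ν w) := fun _ _ hxy =>
  Finset.sum_le_sum_of_subset_of_nonneg (hν.sublevel_subset hxy) fun i _ _ => hw i

lemma FiniteSublevels.partialSum_comp_le (hν : FiniteSublevels ν) {e : κ → ι}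
    (he : Function.Injective e) (hw : ∀ i, 0 ≤ w i) :
    partialSum (ν ∘ e) (w ∘ e) x ≤ partialSum ν w x := by
  calc partialSum (ν ∘ e) (w ∘ e) x
      = ∑ i ∈ (sublevel (ν ∘ e) x).image e, w i := (Finset.sum_image he.injOn).symm
    _ ≤ partialSum ν w x := by
        refine Finset.sum_le_sum_of_subset_of_nonneg ?_ fun i _ _ => hw i
        exact Finset.image_subset_iff.2 fun j hj =>
          hν.mem_sublevel.2 ((hν.comp_injective he).mem_sublevel.1 hj)

lemma partialSum_nonneg (hw : ∀ i, 0 ≤ w i) : 0 ≤ partialSum ν w x :=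
  Finset.sum_nonneg fun i _ => hw i

lemma FiniteSublevels.partialSum_eq_zero (hν : FiniteSublevels ν) (hx : ∀ i, x < ν i) :
    partialSum ν w x = 0 :=
  Finset.sum_eq_zero fun i hi => absurd (hν.mem_sublevel.1 hi) (hx i).not_ge

lemma FiniteSublevels.tendsto_sublevel (hν : FiniteSublevels ν) :
    Tendsto (sublevel ν) atTop atTop :=
  tendsto_atTop_finset_of_monotone (fun _ _ => hν.sublevel_subset) fun i =>
    ⟨ν i, hν.mem_sublevel.2 le_rfl⟩

lemma FiniteSublevels.tendsto_partialSum (hν : FiniteSublevels ν) (hw : Summable w) :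
    Tendsto (partialSum ν w) atTop (𝓝 (∑' i, w i)) :=
  hw.hasSum.comp hν.tendsto_sublevel

lemma FiniteSublevels.summable_of_partialSum_le (hν : FiniteSublevels ν) (hw : ∀ i, 0 ≤ w i)
    {C : ℝ} (hC : ∀ x, 1 ≤ x → partialSum ν w x ≤ C) : Summable w := by
  refine summable_of_sum_le (c := C) hw fun s => ?_
  obtain ⟨B, hB⟩ := (s.image ν).bddAbove
  refine le_trans ?_ (hC (max B 1) (le_max_right _ _))
  refine Finset.sum_le_sum_of_subset_of_nonneg (fun i hi => hν.mem_sublevel.2 ?_) fun i _ _ => hw i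
  exact (hB (Finset.mem_coe.2 (Finset.mem_image_of_mem ν hi))).trans (le_max_left _ _)

lemma intervalIntegrable_mul_ite_le {f' : ℝ → ℝ} {a b : ℝ} (c r : ℝ)
    (hf' : IntervalIntegrable f' volume a b) :
    IntervalIntegrable (fun t => f' t * if c ≤ t then r else 0) volume a b := by
  have indicator_eq : (fun t => f' t * if c ≤ t then r else 0) =
      (Set.Ici c).indicator fun t => f' t * r := by
    ext t
    by_cases ht : c ≤ t <;> simp [Set.indicator, ht]
  rw [indicator_eq, intervalIntegrable_iff]
  exact ((intervalIntegrable_iff.1 hf').mul_const _).indicator measurableSet_Ici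

lemma integral_mul_ite_le {f f' : ℝ → ℝ} {a b c : ℝ} (r : ℝ) (hac : a ≤ c) (hcb : c ≤ b)
    (hf : ∀ t ∈ Set.Icc a b, HasDerivAt f (f' t) t) (hf' : IntervalIntegrable f' volume a b) :
    ∫ t in a..b, f' t * (if c ≤ t then r else 0) = r * (f b - f c) := by
  have hc : c ∈ Set.uIcc a b := Set.mem_uIcc_of_le hac hcb
  have hleft : Set.uIcc a c ⊆ Set.uIcc a b := Set.uIcc_subset_uIcc_left hc
  have hright : Set.uIcc c b ⊆ Set.uIcc a b := Set.uIcc_subset_uIcc_right hc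
  have hfint := intervalIntegrable_mul_ite_le c r hf'
  have integral_left : ∫ t in a..c, f' t * (if c ≤ t then r else 0) = 0 := by
    rw [intervalIntegral.integral_of_le hac, integral_Ioc_eq_integral_Ioo]
    refine setIntegral_eq_zero_of_forall_eq_zero fun t ht => ?_
    rw [if_neg (not_le.2 ht.2), mul_zero]
  have integral_right : ∫ t in c..b, f' t * (if c ≤ t then r else 0) = ∫ t in c..b, f' t * r := by
    refine intervalIntegral.integral_congr fun t ht => ?_
    rw [Set.uIcc_of_le hcb] at ht
    simp [ht.1]
  rw [← intervalIntegral.integral_add_adjacent_intervals (hfint.mono_set hleft)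
      (hfint.mono_set hright), integral_left, integral_right, intervalIntegral.integral_mul_const,
    intervalIntegral.integral_eq_sub_of_hasDerivAt (f := f) _ (hf'.mono_set hright)]
  · ring
  · intro t ht
    rw [Set.uIcc_of_le hcb] at ht
    exact hf t ⟨hac.trans ht.1, ht.2⟩

lemma FiniteSublevels.mul_partialSum_eq_sum (hν : FiniteSublevels ν) (f' : ℝ → ℝ) {t : ℝ}
    (ht : t ≤ x) :
    f' t * partialSum ν w t = ∑ i ∈ sublevel ν x, f' t * if ν i ≤ t then w i else 0 := by
  rw [← Finset.mul_sum, ← Finset.sum_filter, partialSum]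
  congr 2
  ext i
  simp only [Finset.mem_filter, hν.mem_sublevel]
  exact ⟨fun hi => ⟨hi.trans ht, hi⟩, And.right⟩

lemma FiniteSublevels.intervalIntegrable_mul_partialSum (hν : FiniteSublevels ν) {f' : ℝ → ℝ}
    {a : ℝ} (hax : a ≤ x) (hf' : IntervalIntegrable f' volume a x) :
    IntervalIntegrable (fun t => f' t * partialSum ν w t) volume a x := by
  refine (IntervalIntegrable.sum (sublevel ν x) fun i _ =>
    intervalIntegrable_mul_ite_le (ν i) (w i) hf').congr fun t ht => ?_
  rw [Set.uIoc_of_le hax] at ht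
  simp only [Finset.sum_apply, hν.mul_partialSum_eq_sum f' ht.2]

lemma FiniteSublevels.sum_mul_eq_sub_integral (hν : FiniteSublevels ν) {f f' : ℝ → ℝ} {a : ℝ}
    (hax : a ≤ x) (hνa : ∀ i, a ≤ ν i) (hf : ∀ t ∈ Set.Icc a x, HasDerivAt f (f' t) t)
    (hf' : IntervalIntegrable f' volume a x) :
    partialSum ν (fun i => w i * f (ν i)) x =
      f x * partialSum ν w x - ∫ t in a..x, f' t * partialSum ν w t := by
  have integral_eq : ∫ t in a..x, f' t * partialSum ν w t =
      ∑ i ∈ sublevel ν x, w i * (f x - f (ν i)) := by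
    rw [intervalIntegral.integral_congr (g := fun t => ∑ i ∈ sublevel ν x,
      f' t * if ν i ≤ t then w i else 0), intervalIntegral.integral_finsetSum]
    · exact Finset.sum_congr rfl fun i hi =>
        integral_mul_ite_le (w i) (hνa i) (hν.mem_sublevel.1 hi) hf hf'
    · exact fun i _ => intervalIntegrable_mul_ite_le (ν i) (w i) hf'
    · intro t ht
      rw [Set.uIcc_of_le hax] at ht
      exact hν.mul_partialSum_eq_sum f' ht.2
  rw [integral_eq, partialSum, partialSum, Finset.mul_sum, ← Finset.sum_sub_distrib]
  exact Finset.sum_congr rfl fun i _ => by ring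

lemma intervalIntegrable_rpow_of_one_le (s : ℝ) (hx : 1 ≤ x) :
    IntervalIntegrable (fun t : ℝ => t ^ s) volume 1 x := by
  refine intervalIntegral.intervalIntegrable_rpow (Or.inr ?_)
  rw [Set.uIcc_of_le hx]
  exact fun h0 => absurd h0.1 (by norm_num)

section LinearGrowth

variable {K σ : ℝ}

lemma FiniteSublevels.partialSum_mul_rpow_neg_le (hν : FiniteSublevels ν) (hν1 : ∀ i, 1 ≤ ν i)
    (hK : ∀ t, 1 ≤ t → partialSum ν w t ≤ K * t) (hσ : 0 ≤ σ) (hx : 1 ≤ x) :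
    partialSum ν (fun i => w i * ν i ^ (-σ)) x ≤
      K * x ^ (1 - σ) + K * σ * ∫ t in (1 : ℝ)..x, t ^ (-σ) := by
  have hpos : ∀ t ∈ Set.Icc 1 x, 0 < t := fun t ht => one_pos.trans_le ht.1
  have hx0 : 0 < x := one_pos.trans_le hx
  have hfint := (intervalIntegrable_rpow_of_one_le (-σ - 1) hx).const_mul (-σ)
  rw [hν.sum_mul_eq_sub_integral hx hν1 (f := fun t => t ^ (-σ))
      (fun t ht => Real.hasDerivAt_rpow_const (Or.inl (hpos t ht).ne')) hfint,
    sub_eq_add_neg, ← intervalIntegral.integral_neg, ← intervalIntegral.integral_const_mul]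
  refine add_le_add ?_ (intervalIntegral.integral_mono_on hx
    (hν.intervalIntegrable_mul_partialSum hx hfint).neg
    ((intervalIntegrable_rpow_of_one_le (-σ) hx).const_mul _) fun t ht => ?_)
  · calc x ^ (-σ) * partialSum ν w x ≤ x ^ (-σ) * (K * x) := by gcongr; exact hK x hx
      _ = K * x ^ (1 - σ) := by
        rw [show 1 - σ = -σ + 1 by ring, Real.rpow_add_one hx0.ne']; ring
  · have ht0 := hpos t ht
    calc -(-σ * t ^ (-σ - 1) * partialSum ν w t)
        = σ * t ^ (-σ - 1) * partialSum ν w t := by ring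
      _ ≤ σ * t ^ (-σ - 1) * (K * t) := by gcongr; exact hK t ht.1
      _ = K * σ * t ^ (-σ) := by
        rw [show -σ = (-σ - 1) + 1 by ring, Real.rpow_add_one ht0.ne']; ring_nf

lemma FiniteSublevels.partialSum_mul_rpow_neg_le_of_lt_one (hν : FiniteSublevels ν)
    (hν1 : ∀ i, 1 ≤ ν i) (hK0 : 0 ≤ K) (hK : ∀ t, 1 ≤ t → partialSum ν w t ≤ K * t)
    (hσ : 0 ≤ σ) (hσ1 : σ < 1) (hx : 1 ≤ x) :
    partialSum ν (fun i => w i * ν i ^ (-σ)) x ≤ K / (1 - σ) * x ^ (1 - σ) := by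
  refine (hν.partialSum_mul_rpow_neg_le hν1 hK hσ hx).trans ?_
  rw [integral_rpow (Or.inl (by linarith)), Real.one_rpow, show -σ + 1 = 1 - σ by ring]
  have hσ' : 0 < 1 - σ := by linarith
  have excess : K / (1 - σ) * x ^ (1 - σ) -
      (K * x ^ (1 - σ) + K * σ * ((x ^ (1 - σ) - 1) / (1 - σ))) = K * σ / (1 - σ) := by
    field_simp; ring
  have : 0 ≤ K * σ / (1 - σ) := by positivity
  linarith

lemma FiniteSublevels.partialSum_mul_rpow_neg_le_of_one_lt (hν : FiniteSublevels ν)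
    (hν1 : ∀ i, 1 ≤ ν i) (hK0 : 0 ≤ K) (hK : ∀ t, 1 ≤ t → partialSum ν w t ≤ K * t)
    (hσ : 1 < σ) (hx : 1 ≤ x) :
    partialSum ν (fun i => w i * ν i ^ (-σ)) x ≤ K + K * σ / (σ - 1) := by
  refine (hν.partialSum_mul_rpow_neg_le hν1 hK (by linarith) hx).trans ?_
  have zero_notMem : (0 : ℝ) ∉ Set.uIcc 1 x := by
    rw [Set.uIcc_of_le hx]; exact fun h0 => absurd h0.1 (by norm_num)
  have rpow_le : x ^ (1 - σ) ≤ 1 := Real.rpow_le_one_of_one_le_of_nonpos hx (by linarith)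
  have rpow_pos : 0 < x ^ (1 - σ) := Real.rpow_pos_of_pos (by linarith) _
  rw [integral_rpow (Or.inr ⟨by linarith, zero_notMem⟩), Real.one_rpow,
    show -σ + 1 = 1 - σ by ring, ← neg_div_neg_eq, neg_sub, neg_sub, mul_div_assoc']
  refine add_le_add (mul_le_of_le_one_right hK0 rpow_le)
    (div_le_div_of_nonneg_right ?_ (by linarith))
  exact mul_le_of_le_one_right (by positivity) (by linarith)

lemma FiniteSublevels.summable_mul_rpow_neg (hν : FiniteSublevels ν) (hν1 : ∀ i, 1 ≤ ν i)
    (hw : ∀ i, 0 ≤ w i) (hK0 : 0 ≤ K) (hK : ∀ t, 1 ≤ t → partialSum ν w t ≤ K * t)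
    (hσ : 1 < σ) : Summable fun i => w i * ν i ^ (-σ) :=
  hν.summable_of_partialSum_le
    (fun i => mul_nonneg (hw i) (Real.rpow_nonneg (zero_le_one.trans (hν1 i)) _))
    fun _ hx => hν.partialSum_mul_rpow_neg_le_of_one_lt hν1 hK0 hK hσ hx

end LinearGrowth

end PartialSum

/-! ### The norm on the free abelian monoid -/

section Norm

variable {P : Type*} {N : P → ℕ} {x : ℝ}

/-- The norm of an element, as a real number. -/
def elemNorm (N : P → ℕ) (m : P →₀ ℕ) : ℝ := Nm N m

/-- The norm of a prime element, as a real number. -/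
def primeNorm (N : P → ℕ) (p : P) : ℝ := N p

/-- The prime power `p ^ (k + 1)`; the shift makes this a bijection onto the prime powers. -/
def primePow (i : P × ℕ) : P →₀ ℕ := Finsupp.single i.1 (i.2 + 1)

/-- The squarefree element `∏_{p ∈ S} p`. -/
def primeProduct (S : Finset P) : P →₀ ℕ := Finsupp.indicator S fun _ _ => 1

/-- The number `I(x)` of elements of norm at most `x`. -/
def elementCount (N : P → ℕ) : ℝ → ℝ := partialSum (elemNorm N) fun _ => 1

/-- The part of the hypotheses that concerns neither density nor error term: prime elements have
norm at least `2`, and only finitely many elements have bounded norm. -/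
structure IsDiscreteNorm (N : P → ℕ) : Prop where
  two_le : ∀ p, 2 ≤ N p
  finiteSublevels : FiniteSublevels (elemNorm N)

lemma elemNorm_zero : elemNorm N 0 = 1 := by simp [elemNorm, Nm]

lemma elemNorm_add (a b : P →₀ ℕ) : elemNorm N (a + b) = elemNorm N a * elemNorm N b := by
  rw [elemNorm, Nm, Finsupp.prod_add_index' (by simp) fun p k l => pow_add (N p) k l]
  exact Nat.cast_mul _ _

lemma elemNorm_single (p : P) (k : ℕ) : elemNorm N (Finsupp.single p k) = primeNorm N p ^ k := by
  simp [elemNorm, Nm, primeNorm]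

lemma elemNorm_nsmul (k : ℕ) (m : P →₀ ℕ) : elemNorm N (k • m) = elemNorm N m ^ k := by
  induction k with
  | zero => simp [elemNorm_zero]
  | succ k ih => rw [succ_nsmul, elemNorm_add, ih, pow_succ]

lemma elemNorm_eq_prod (m : P →₀ ℕ) : elemNorm N m = ∏ p ∈ m.support, primeNorm N p ^ m p := by
  simp [elemNorm, Nm, Finsupp.prod, primeNorm]

lemma primeNorm_eq_comp : primeNorm N = elemNorm N ∘ fun p => Finsupp.single p 1 := by
  ext p
  rw [Function.comp_apply, elemNorm_single, pow_one]

lemma primePow_injective : Function.Injective (primePow : P × ℕ → P →₀ ℕ) := by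
  rintro ⟨p, k⟩ ⟨q, l⟩ heq
  rcases Finsupp.single_eq_single_iff .. |>.1 heq with ⟨hpq, hkl⟩ | ⟨hk, -⟩
  · exact Prod.ext hpq (Nat.succ_injective hkl)
  · exact absurd hk k.succ_ne_zero

lemma primePow_le_iff {i : P × ℕ} {m : P →₀ ℕ} : primePow i ≤ m ↔ i.2 < m i.1 := by
  rw [primePow, Finsupp.single_le_iff, Nat.succ_le_iff]

lemma primeProduct_apply (S : Finset P) (p : P) : primeProduct S p = if p ∈ S then 1 else 0 := by
  simp [primeProduct, Finsupp.indicator_apply]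

lemma primeProduct_injective : Function.Injective (primeProduct : Finset P → P →₀ ℕ) := by
  intro S T hST
  ext p
  have heq := DFunLike.congr_fun hST p
  rw [primeProduct_apply, primeProduct_apply] at heq
  by_cases hS : p ∈ S <;> by_cases hT : p ∈ T <;> simp_all

lemma primeProduct_le_iff {S : Finset P} {m : P →₀ ℕ} : primeProduct S ≤ m ↔ S ⊆ m.support := by
  refine forall_congr' fun p => ?_
  rw [primeProduct_apply, Finsupp.mem_support_iff]
  split_ifs with hp <;> simp [hp, Nat.one_le_iff_ne_zero]

lemma elementCount_nonneg : 0 ≤ elementCount N x := partialSum_nonneg fun _ => zero_le_one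

namespace IsDiscreteNorm

variable (hN : IsDiscreteNorm N)
include hN

lemma two_le_primeNorm (p : P) : 2 ≤ primeNorm N p := Nat.ofNat_le_cast.2 (hN.two_le p)

lemma primeNorm_pos (p : P) : 0 < primeNorm N p := two_pos.trans_le (hN.two_le_primeNorm p)

lemma one_le_primeNorm (p : P) : 1 ≤ primeNorm N p := one_le_two.trans (hN.two_le_primeNorm p)

lemma log_primeNorm_pos (p : P) : 0 < Real.log (primeNorm N p) :=
  Real.log_pos (one_lt_two.trans_le (hN.two_le_primeNorm p))

lemma one_le_elemNorm (m : P →₀ ℕ) : 1 ≤ elemNorm N m := by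
  rw [elemNorm_eq_prod]
  exact Finset.one_le_prod fun p _ => one_le_pow₀ (hN.one_le_primeNorm p)

lemma elemNorm_pos (m : P →₀ ℕ) : 0 < elemNorm N m := one_pos.trans_le (hN.one_le_elemNorm m)

lemma elemNorm_mono : Monotone (elemNorm N) := fun a b hab => by
  rw [← tsub_add_cancel_of_le hab, elemNorm_add]
  exact le_mul_of_one_le_left (hN.elemNorm_pos a).le (hN.one_le_elemNorm _)

lemma log_elemNorm (m : P →₀ ℕ) :
    Real.log (elemNorm N m) = ∑ p ∈ m.support, m p * Real.log (primeNorm N p) := by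
  rw [elemNorm_eq_prod, Real.log_prod fun p _ => (pow_pos (hN.primeNorm_pos p) _).ne']
  exact Finset.sum_congr rfl fun p _ => Real.log_pow _ _

lemma finiteSublevels_primeNorm : FiniteSublevels (primeNorm N) := by
  rw [primeNorm_eq_comp]
  exact hN.finiteSublevels.comp_injective (Finsupp.single_left_injective one_ne_zero)

lemma finiteSublevels_primePow : FiniteSublevels (elemNorm N ∘ primePow) :=
  hN.finiteSublevels.comp_injective primePow_injective

lemma finiteSublevels_primeProduct : FiniteSublevels (elemNorm N ∘ primeProduct) :=
  hN.finiteSublevels.comp_injective primeProduct_injective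

lemma elementCount_eq_zero (hx : x < 1) : elementCount N x = 0 :=
  hN.finiteSublevels.partialSum_eq_zero fun m => hx.trans_le (hN.one_le_elemNorm m)

lemma elementCount_mono : Monotone (elementCount N) :=
  hN.finiteSublevels.partialSum_mono fun _ => zero_le_one

lemma sum_filter_le_eq (e : P →₀ ℕ) (x : ℝ) (φ : (P →₀ ℕ) → ℝ) :
    ∑ m ∈ sublevel (elemNorm N) x with e ≤ m, φ m =
      ∑ m ∈ sublevel (elemNorm N) (x / elemNorm N e), φ (m + e) := by
  have mem_div {m : P →₀ ℕ} :
      m ∈ sublevel (elemNorm N) (x / elemNorm N e) ↔ elemNorm N (m + e) ≤ x := by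
    rw [hN.finiteSublevels.mem_sublevel, le_div_iff₀ (hN.elemNorm_pos e), elemNorm_add]
  refine Finset.sum_bij' (fun m _ => m - e) (fun m _ => m + e) ?_ ?_ ?_ ?_ ?_ <;>
    simp only [Finset.mem_filter, mem_div]
  · exact fun m hm => (tsub_add_cancel_of_le hm.2).symm ▸ hN.finiteSublevels.mem_sublevel.1 hm.1
  · exact fun m hm => ⟨hN.finiteSublevels.mem_sublevel.2 hm, le_add_self⟩
  · exact fun m hm => tsub_add_cancel_of_le hm.2
  · exact fun m _ => add_tsub_cancel_right m e
  · exact fun m hm => by rw [tsub_add_cancel_of_le hm.2]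

end IsDiscreteNorm

end Norm

/-! ### The counting hypothesis in uniform form -/

section UniformStar

variable {P : Type*} {N : P → ℕ} {κ θ τ K : ℝ}

/-- Condition (★) with an explicit constant, valid for all `z > 0` rather than asymptotically. -/
structure UniformStar (N : P → ℕ) (κ τ K : ℝ) : Prop extends IsDiscreteNorm N where
  density_pos : 0 < κ
  exponent_pos : 0 < τ
  exponent_lt_one : τ < 1
  abs_elementCount_sub_le : ∀ z, 0 < z → |elementCount N z - κ * z| ≤ K * z ^ τ

lemma ncard_eq_elementCount (hfin : FiniteSublevels (elemNorm N)) (x : ℝ) :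
    ({m : P →₀ ℕ | (Nm N m : ℝ) ≤ x}.ncard : ℝ) = elementCount N x := by
  have coe_sublevel : {m : P →₀ ℕ | (Nm N m : ℝ) ≤ x} = sublevel (elemNorm N) x := by
    ext m
    rw [Finset.mem_coe, hfin.mem_sublevel, elemNorm, Set.mem_ofPred_eq]
  simp [coe_sublevel, elementCount, partialSum]

lemma rpow_isLittleO_id_of_lt_one (hθ : θ < 1) :
    (fun x : ℝ => x ^ θ) =o[atTop] fun x : ℝ => x := by
  refine (isLittleO_iff_tendsto' ?_).2 ?_
  · filter_upwards [eventually_gt_atTop 0] with x hx h0 using absurd h0 hx.ne'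
  · refine (tendsto_rpow_neg_atTop (sub_pos.2 hθ)).congr' ?_
    filter_upwards [eventually_gt_atTop 0] with x hx
    rw [neg_sub, Real.rpow_sub_one (ne_of_gt hx)]

/- The `ncard` of an infinite set is `0`, so an infinite sublevel set would force
`κ * x = O(x ^ θ)`. -/
lemma StarCond.finiteSublevels (hstar : StarCond N κ θ) : FiniteSublevels (elemNorm N) := by
  obtain ⟨hκ, -, hθ, hO⟩ := hstar
  by_contra hcon
  obtain ⟨x₀, hx₀⟩ := not_forall.1 hcon
  have hlinear : (fun x : ℝ => x) =O[atTop] fun x : ℝ => x ^ θ := by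
    refine ((hO.const_mul_left (-κ⁻¹)).congr' ?_ EventuallyEq.rfl)
    filter_upwards [eventually_ge_atTop x₀] with x hx
    have hinf : {m : P →₀ ℕ | (Nm N m : ℝ) ≤ x}.Infinite :=
      Set.Infinite.mono (fun m hm => le_trans hm hx) hx₀
    rw [hinf.ncard, Nat.cast_zero]
    field_simp
    ring
  refine isLittleO_irrefl (Eventually.frequently ?_)
    (hlinear.trans_isLittleO (rpow_isLittleO_id_of_lt_one hθ))
  filter_upwards [eventually_ne_atTop 0] with x hx using hx

lemma StarCond.isDiscreteNorm (hstar : StarCond N κ θ) (hN : ∀ p, 2 ≤ N p) : IsDiscreteNorm N :=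
  ⟨hN, hstar.finiteSublevels⟩

lemma StarCond.exists_uniformStar (hstar : StarCond N κ θ) (hN : ∀ p, 2 ≤ N p) (hθτ : θ ≤ τ)
    (hτ0 : 0 < τ) (hτ1 : τ < 1) : ∃ K, UniformStar N κ τ K := by
  have hdisc := hstar.isDiscreteNorm hN
  obtain ⟨hκ, -, -, hO⟩ := hstar
  simp only [ncard_eq_elementCount hdisc.finiteSublevels] at hO
  obtain ⟨c, hc⟩ := hO.bound
  obtain ⟨X, hX⟩ := eventually_atTop.1 (hc.and (eventually_ge_atTop 1))
  have hX1 : 1 ≤ X := (hX X le_rfl).2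
  have hI0 : 0 ≤ elementCount N X := elementCount_nonneg
  refine ⟨|c| + (elementCount N X + κ * X), hdisc, hκ, hτ0, hτ1, fun z hz => ?_⟩
  have hzτ : 0 < z ^ τ := Real.rpow_pos_of_pos hz τ
  rw [add_mul]
  rcases lt_or_ge z 1 with hz1 | hz1
  · have hzz : z ≤ z ^ τ := by
      simpa using Real.rpow_le_rpow_of_exponent_ge hz hz1.le hτ1.le
    rw [hdisc.elementCount_eq_zero hz1, zero_sub, abs_neg, abs_of_pos (by positivity)]
    calc κ * z ≤ (κ * X) * z ^ τ := by gcongr; exact le_mul_of_one_le_right hκ.le hX1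
      _ ≤ |c| * z ^ τ + (elementCount N X + κ * X) * z ^ τ := by
        nlinarith [mul_nonneg (abs_nonneg c) hzτ.le, mul_nonneg hI0 hzτ.le]
  rcases le_total X z with hXz | hzX
  · have hbound := (hX z hXz).1
    rw [Real.norm_eq_abs, Real.norm_of_nonneg (Real.rpow_nonneg hz.le θ)] at hbound
    calc |elementCount N z - κ * z| ≤ c * z ^ θ := hbound
      _ ≤ |c| * z ^ τ := by gcongr; exact le_abs_self c
      _ ≤ _ := le_add_of_nonneg_right (by positivity)
  · have hcount : |elementCount N z - κ * z| ≤ elementCount N X + κ * X := by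
      have hmono := hdisc.elementCount_mono hzX
      have hnonneg : 0 ≤ elementCount N z := elementCount_nonneg
      have hκz : κ * z ≤ κ * X := by gcongr
      rw [abs_le]
      constructor <;> nlinarith
    calc |elementCount N z - κ * z| ≤ elementCount N X + κ * X := hcount
      _ ≤ (elementCount N X + κ * X) * z ^ τ :=
        le_mul_of_one_le_right (by positivity) (Real.one_le_rpow hz1 hτ0.le)
      _ ≤ _ := le_add_of_nonneg_left (by positivity)

namespace UniformStar

variable (H : UniformStar N κ τ K)
include H

lemma constant_nonneg : 0 ≤ K := by
  simpa using (abs_nonneg _).trans (H.abs_elementCount_sub_le 1 one_pos)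

lemma density_add_constant_nonneg : 0 ≤ κ + K := add_nonneg H.density_pos.le H.constant_nonneg

lemma elementCount_le (t : ℝ) (ht : 1 ≤ t) : elementCount N t ≤ (κ + K) * t := by
  have hrpow : t ^ τ ≤ t := by
    simpa using Real.rpow_le_rpow_of_exponent_le ht H.exponent_lt_one.le
  have hbound := (abs_le.1 (H.abs_elementCount_sub_le t (one_pos.trans_le ht))).2
  linarith [mul_le_mul_of_nonneg_left hrpow H.constant_nonneg]

lemma partialSum_elemNorm_rpow_neg_le {σ x : ℝ} (hσ0 : 0 ≤ σ) (hσ1 : σ < 1) (hx : 1 ≤ x) :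
    partialSum (elemNorm N) (fun m => elemNorm N m ^ (-σ)) x ≤
      (κ + K) / (1 - σ) * x ^ (1 - σ) := by
  simpa only [one_mul] using H.finiteSublevels.partialSum_mul_rpow_neg_le_of_lt_one
    H.one_le_elemNorm H.density_add_constant_nonneg H.elementCount_le hσ0 hσ1 hx

lemma summable_elemNorm_rpow_neg {σ : ℝ} (hσ : 1 < σ) :
    Summable fun m => elemNorm N m ^ (-σ) := by
  simpa only [one_mul] using H.finiteSublevels.summable_mul_rpow_neg H.one_le_elemNorm
    (fun _ => zero_le_one) H.density_add_constant_nonneg H.elementCount_le hσ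

end UniformStar

end UniformStar

/-! ### Chebyshev's upper bound -/

section Chebyshev

open MeasureTheory

variable {P : Type*} {N : P → ℕ} {κ τ K : ℝ}

/-- Chebyshev's function `ψ(x) = ∑_{N(p) ^ k ≤ x} log N(p)`, the sum being over `k ≥ 1`. -/
def chebyshevPsi (N : P → ℕ) : ℝ → ℝ :=
  partialSum (elemNorm N ∘ primePow) fun i => Real.log (primeNorm N i.1)

namespace IsDiscreteNorm

variable (hN : IsDiscreteNorm N)
include hN

lemma log_elemNorm_eq_sum_primePow {m : P →₀ ℕ} {x : ℝ} (hm : elemNorm N m ≤ x) :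
    Real.log (elemNorm N m) = ∑ i ∈ sublevel (elemNorm N ∘ primePow) x with primePow i ≤ m,
      Real.log (primeNorm N i.1) := by
  have filter_eq : {i ∈ sublevel (elemNorm N ∘ primePow) x | primePow i ≤ m} =
      (m.support.sigma fun p => Finset.range (m p)).map
        (Equiv.sigmaEquivProd P ℕ).toEmbedding := by
    ext ⟨p, k⟩
    simp only [Finset.mem_filter, hN.finiteSublevels_primePow.mem_sublevel, Finset.mem_map_equiv,
      Finset.mem_sigma, Finset.mem_range, Finsupp.mem_support_iff, primePow_le_iff,
      Equiv.sigmaEquivProd, Equiv.coe_fn_symm_mk]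
    refine ⟨fun hpk => ⟨Nat.ne_zero_of_lt hpk.2, hpk.2⟩, fun hpk => ⟨?_, hpk.2⟩⟩
    exact (hN.elemNorm_mono (primePow_le_iff.2 hpk.2)).trans hm
  rw [filter_eq, Finset.sum_map, Finset.sum_sigma, hN.log_elemNorm]
  simp

lemma partialSum_log_eq_sum_primePow (x : ℝ) :
    partialSum (elemNorm N) (fun m => Real.log (elemNorm N m)) x =
      ∑ i ∈ sublevel (elemNorm N ∘ primePow) x,
        Real.log (primeNorm N i.1) * elementCount N (x / elemNorm N (primePow i)) := by
  calc partialSum (elemNorm N) (fun m => Real.log (elemNorm N m)) x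
      = ∑ m ∈ sublevel (elemNorm N) x, ∑ i ∈ sublevel (elemNorm N ∘ primePow) x,
          if primePow i ≤ m then Real.log (primeNorm N i.1) else 0 :=
        Finset.sum_congr rfl fun m hm =>
          (hN.log_elemNorm_eq_sum_primePow (hN.finiteSublevels.mem_sublevel.1 hm)).trans
            (Finset.sum_filter _ _)
    _ = _ := by
        rw [Finset.sum_comm]
        refine Finset.sum_congr rfl fun i _ => ?_
        rw [← Finset.sum_filter, hN.sum_filter_le_eq, elementCount, partialSum, Finset.mul_sum]
        simp only [mul_one]

lemma partialSum_log_eq_sum_chebyshevPsi (x : ℝ) :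
    partialSum (elemNorm N) (fun m => Real.log (elemNorm N m)) x =
      ∑ m ∈ sublevel (elemNorm N) x, chebyshevPsi N (x / elemNorm N m) := by
  rw [hN.partialSum_log_eq_sum_primePow]
  simp only [elementCount, chebyshevPsi, partialSum, Finset.mul_sum, mul_one]
  refine Finset.sum_comm' fun i m => ?_
  simp only [hN.finiteSublevels.mem_sublevel, hN.finiteSublevels_primePow.mem_sublevel,
    Function.comp_apply, le_div_iff₀ (hN.elemNorm_pos _)]
  have hi := hN.one_le_elemNorm (primePow i)
  have hm := hN.one_le_elemNorm m
  constructor <;> rintro ⟨_, _⟩ <;> constructor <;> nlinarith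

lemma intervalIntegrable_mul_elementCount {f' : ℝ → ℝ} {a x : ℝ} (hax : a ≤ x)
    (hf' : IntervalIntegrable f' volume a x) :
    IntervalIntegrable (fun t => f' t * elementCount N t) volume a x :=
  hN.finiteSublevels.intervalIntegrable_mul_partialSum hax hf'

lemma sum_neg_one_pow_card_eq_ite {m : P →₀ ℕ} {x : ℝ} (hm : elemNorm N m ≤ x) :
    ∑ S ∈ sublevel (elemNorm N ∘ primeProduct) x with primeProduct S ≤ m, (-1 : ℝ) ^ S.card =
      if m = 0 then 1 else 0 := by
  have filter_eq : {S ∈ sublevel (elemNorm N ∘ primeProduct) x | primeProduct S ≤ m} =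
      m.support.powerset := by
    ext S
    simp only [Finset.mem_filter, hN.finiteSublevels_primeProduct.mem_sublevel,
      Finset.mem_powerset, ← primeProduct_le_iff]
    exact ⟨And.right, fun hS => ⟨(hN.elemNorm_mono hS).trans hm, hS⟩⟩
  rw [filter_eq]
  simpa [apply_ite (Int.cast : ℤ → ℝ)] using
    congrArg (Int.cast : ℤ → ℝ) (Finset.sum_powerset_neg_one_pow_card (x := m.support))

lemma moebius_inversion {x : ℝ} (hx : 1 ≤ x) (g : (P →₀ ℕ) → ℝ) :
    g 0 = ∑ S ∈ sublevel (elemNorm N ∘ primeProduct) x, (-1) ^ S.card *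
      ∑ m ∈ sublevel (elemNorm N) (x / elemNorm N (primeProduct S)), g (m + primeProduct S) := by
  symm
  calc _ = ∑ S ∈ sublevel (elemNorm N ∘ primeProduct) x, ∑ m ∈ sublevel (elemNorm N) x,
          if primeProduct S ≤ m then (-1) ^ S.card * g m else 0 :=
        Finset.sum_congr rfl fun S _ => by
          rw [← hN.sum_filter_le_eq, Finset.mul_sum, Finset.sum_filter]
    _ = ∑ m ∈ sublevel (elemNorm N) x, if m = 0 then g m else 0 := by
        rw [Finset.sum_comm]
        refine Finset.sum_congr rfl fun m hm => ?_
        rw [← Finset.sum_filter, ← Finset.sum_mul,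
          hN.sum_neg_one_pow_card_eq_ite (hN.finiteSublevels.mem_sublevel.1 hm), ite_mul, one_mul,
          zero_mul]
    _ = g 0 := by
        rw [Finset.sum_ite_eq', if_pos]
        rwa [hN.finiteSublevels.mem_sublevel, elemNorm_zero]

end IsDiscreteNorm

namespace UniformStar

variable (H : UniformStar N κ τ K)
include H

lemma abs_rpow_neg_mul_sub_le {t : ℝ} (ht : 0 < t) (s : ℝ) :
    |t ^ (-s) * (elementCount N t - κ * t)| ≤ K * t ^ (τ - s) := by
  rw [abs_mul, abs_of_pos (Real.rpow_pos_of_pos ht _), sub_eq_neg_add τ,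
    Real.rpow_add ht, mul_left_comm]
  gcongr
  exact H.abs_elementCount_sub_le t ht

lemma partialSum_log_eq_sub_integral {x : ℝ} (hx : 1 ≤ x) :
    partialSum (elemNorm N) (fun m => Real.log (elemNorm N m)) x =
      Real.log x * elementCount N x - ∫ t in (1 : ℝ)..x, t ^ (-1 : ℝ) * elementCount N t := by
  rw [elementCount, ← H.finiteSublevels.sum_mul_eq_sub_integral hx H.one_le_elemNorm
    (fun t ht => ?_) (intervalIntegrable_rpow_of_one_le (-1) hx)]
  · simp only [one_mul]
  · rw [Real.rpow_neg_one]
    exact Real.hasDerivAt_log (one_pos.trans_le ht.1).ne'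

lemma abs_integral_sub_le {x : ℝ} (hx : 1 ≤ x) :
    |(∫ t in (1 : ℝ)..x, t ^ (-1 : ℝ) * elementCount N t) - κ * (x - 1)| ≤ K / τ * x ^ τ := by
  have hτ := H.exponent_pos
  have integral_eq : (∫ t in (1 : ℝ)..x, t ^ (-1 : ℝ) * elementCount N t) - κ * (x - 1) =
      ∫ t in (1 : ℝ)..x, t ^ (-1 : ℝ) * (elementCount N t - κ * t) := by
    have hconst : κ * (x - 1) = ∫ _ in (1 : ℝ)..x, κ := by simp [mul_comm]
    rw [hconst, ← intervalIntegral.integral_sub (H.intervalIntegrable_mul_elementCount hx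
      (intervalIntegrable_rpow_of_one_le (-1) hx)) intervalIntegrable_const]
    refine intervalIntegral.integral_congr fun t ht => ?_
    rw [Set.uIcc_of_le hx] at ht
    have ht0 : t ≠ 0 := (one_pos.trans_le ht.1).ne'
    simp only [Real.rpow_neg_one]
    field_simp
  rw [integral_eq, ← Real.norm_eq_abs]
  calc ‖∫ t in (1 : ℝ)..x, t ^ (-1 : ℝ) * (elementCount N t - κ * t)‖
      ≤ ∫ t in (1 : ℝ)..x, K * t ^ (τ - 1) :=
        intervalIntegral.norm_integral_le_of_norm_le hx
          (Eventually.of_forall fun t ht => H.abs_rpow_neg_mul_sub_le (one_pos.trans ht.1) 1)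
          ((intervalIntegrable_rpow_of_one_le (τ - 1) hx).const_mul K)
    _ = K / τ * (x ^ τ - 1) := by
        rw [intervalIntegral.integral_const_mul, integral_rpow (Or.inl (by linarith)),
          sub_add_cancel, Real.one_rpow]
        ring
    _ ≤ K / τ * x ^ τ :=
        mul_le_mul_of_nonneg_left (sub_le_self _ zero_le_one) (div_nonneg H.constant_nonneg hτ.le)

lemma abs_partialSum_log_sub_le {x : ℝ} (hx : 1 ≤ x) :
    |partialSum (elemNorm N) (fun m => Real.log (elemNorm N m)) x - κ * x * Real.log x + κ * x| ≤
      (K * (2 / (1 - τ)) + κ + K / τ) * x ^ ((1 + τ) / 2) := by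
  have hτ0 := H.exponent_pos
  have hτ1 := H.exponent_lt_one
  have hK := H.constant_nonneg
  have hκ := H.density_pos
  have hx0 : 0 < x := one_pos.trans_le hx
  have hlog0 : 0 ≤ Real.log x := Real.log_nonneg hx
  have log_mul_le : |Real.log x * (elementCount N x - κ * x)| ≤
      K * (2 / (1 - τ)) * x ^ ((1 + τ) / 2) := by
    have hlog : Real.log x ≤ x ^ ((1 - τ) / 2) / ((1 - τ) / 2) :=
      Real.log_le_rpow_div hx0.le (by linarith)
    rw [abs_mul, abs_of_nonneg hlog0, show (1 + τ) / 2 = (1 - τ) / 2 + τ by ring,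
      Real.rpow_add hx0]
    calc Real.log x * |elementCount N x - κ * x|
        ≤ x ^ ((1 - τ) / 2) / ((1 - τ) / 2) * (K * x ^ τ) := by
          gcongr; exact H.abs_elementCount_sub_le x hx0
      _ = K * (2 / (1 - τ)) * (x ^ ((1 - τ) / 2) * x ^ τ) := by
          have : 1 - τ ≠ 0 := by linarith
          field_simp
  have integral_le : |(∫ t in (1 : ℝ)..x, t ^ (-1 : ℝ) * elementCount N t) - κ * (x - 1)| ≤
      K / τ * x ^ ((1 + τ) / 2) := by
    refine (H.abs_integral_sub_le hx).trans ?_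
    gcongr
    linarith
  have kappa_le : |κ| ≤ κ * x ^ ((1 + τ) / 2) := by
    rw [abs_of_pos hκ]
    exact le_mul_of_one_le_right hκ.le (Real.one_le_rpow hx (by linarith))
  rw [H.partialSum_log_eq_sub_integral hx]
  rw [abs_le] at *
  constructor <;> linarith

lemma integrableOn_harmonicRemainder {x : ℝ} (hx : 0 < x) :
    IntegrableOn (fun t => t ^ (-2 : ℝ) * (elementCount N t - κ * t)) (Set.Ioi x) := by
  have hmajorant : IntegrableOn (fun t : ℝ => K * t ^ (τ - 2)) (Set.Ioi x) :=
    (integrableOn_Ioi_rpow_of_lt (by linarith [H.exponent_lt_one]) hx).const_mul K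
  refine hmajorant.mono' (Measurable.aestronglyMeasurable ?_) ?_
  · exact (measurable_id.pow_const _).mul
      (H.elementCount_mono.measurable.sub (measurable_id.const_mul κ))
  · filter_upwards [ae_restrict_mem measurableSet_Ioi] with t ht
    exact H.abs_rpow_neg_mul_sub_le (hx.trans ht) 2

lemma abs_integral_harmonicRemainder_le {x : ℝ} (hx : 0 < x) :
    |∫ t in Set.Ioi x, t ^ (-2 : ℝ) * (elementCount N t - κ * t)| ≤
      K / (1 - τ) * x ^ (τ - 1) := by
  have hτ := H.exponent_lt_one
  calc |∫ t in Set.Ioi x, t ^ (-2 : ℝ) * (elementCount N t - κ * t)|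
      ≤ ∫ t in Set.Ioi x, K * t ^ (τ - 2) := by
        have hmajorant : IntegrableOn (fun t : ℝ => K * t ^ (τ - 2)) (Set.Ioi x) :=
          (integrableOn_Ioi_rpow_of_lt (by linarith) hx).const_mul K
        rw [← Real.norm_eq_abs]
        refine norm_integral_le_of_norm_le hmajorant ?_
        filter_upwards [ae_restrict_mem measurableSet_Ioi] with t ht
        exact H.abs_rpow_neg_mul_sub_le (hx.trans ht) 2
    _ = K / (1 - τ) * x ^ (τ - 1) := by
        rw [MeasureTheory.integral_const_mul, integral_Ioi_rpow_of_lt (by linarith) hx,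
          show τ - 2 + 1 = -(1 - τ) by ring, div_neg, neg_div, neg_neg,
          show τ - 1 = -(1 - τ) by ring]
        ring

lemma partialSum_inv_eq {x : ℝ} (hx : 1 ≤ x) :
    partialSum (elemNorm N) (fun m => (elemNorm N m)⁻¹) x = x⁻¹ * elementCount N x +
      κ * Real.log x + ∫ t in (1 : ℝ)..x, t ^ (-2 : ℝ) * (elementCount N t - κ * t) := by
  have hx0 : 0 < x := one_pos.trans_le hx
  have hfint : IntervalIntegrable (fun t : ℝ => -t ^ (-2 : ℝ)) volume 1 x :=
    (intervalIntegrable_rpow_of_one_le (-2) hx).neg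
  have habel := H.finiteSublevels.sum_mul_eq_sub_integral (w := fun _ => 1) hx H.one_le_elemNorm
    (f := fun t => t⁻¹) (f' := fun t => -t ^ (-2 : ℝ)) (fun t ht => by
      simpa [Real.rpow_neg (zero_le_one.trans ht.1)] using
        hasDerivAt_inv (one_pos.trans_le ht.1).ne') hfint
  have integral_inv : κ * Real.log x = ∫ t in (1 : ℝ)..x, κ * t ^ (-1 : ℝ) := by
    rw [intervalIntegral.integral_const_mul]
    simp only [Real.rpow_neg_one, integral_inv_of_pos one_pos hx0, div_one]
  have integral_neg : ∫ t in (1 : ℝ)..x, t ^ (-2 : ℝ) * (elementCount N t - κ * t) =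
      (∫ t in (1 : ℝ)..x, -(-t ^ (-2 : ℝ) * elementCount N t)) - κ * Real.log x := by
    rw [integral_inv, ← intervalIntegral.integral_sub
      (f := fun t => -(-t ^ (-2 : ℝ) * elementCount N t))
      (H.intervalIntegrable_mul_elementCount hx hfint).neg
      ((intervalIntegrable_rpow_of_one_le (-1) hx).const_mul κ)]
    refine intervalIntegral.integral_congr fun t ht => ?_
    rw [Set.uIcc_of_le hx] at ht
    have ht0 : t ≠ 0 := (one_pos.trans_le ht.1).ne'
    rw [show (-1 : ℝ) = -2 + 1 by norm_num, Real.rpow_add_one ht0]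
    ring
  simp only [one_mul] at habel
  rw [habel, integral_neg, intervalIntegral.integral_neg, elementCount]
  ring

lemma exists_abs_partialSum_inv_sub_le : ∃ c C : ℝ, 0 ≤ C ∧ ∀ x, 1 ≤ x →
    |partialSum (elemNorm N) (fun m => (elemNorm N m)⁻¹) x - κ * Real.log x - c| ≤
      C * x ^ (τ - 1) := by
  have hτ : 0 < 1 - τ := sub_pos.2 H.exponent_lt_one
  refine ⟨κ + ∫ t in Set.Ioi 1, t ^ (-2 : ℝ) * (elementCount N t - κ * t), K + K / (1 - τ),
    add_nonneg H.constant_nonneg (div_nonneg H.constant_nonneg hτ.le), fun x hx => ?_⟩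
  have hx0 : 0 < x := one_pos.trans_le hx
  have remainder_eq : partialSum (elemNorm N) (fun m => (elemNorm N m)⁻¹) x - κ * Real.log x -
      (κ + ∫ t in Set.Ioi 1, t ^ (-2 : ℝ) * (elementCount N t - κ * t)) =
      x ^ (-1 : ℝ) * (elementCount N x - κ * x) -
        ∫ t in Set.Ioi x, t ^ (-2 : ℝ) * (elementCount N t - κ * t) := by
    rw [H.partialSum_inv_eq hx, ← intervalIntegral.integral_interval_add_Ioi
      (H.integrableOn_harmonicRemainder one_pos) (H.integrableOn_harmonicRemainder hx0),
      Real.rpow_neg_one]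
    field_simp
    ring
  rw [remainder_eq, add_mul]
  exact (abs_sub _ _).trans (add_le_add (H.abs_rpow_neg_mul_sub_le hx0 1)
    (H.abs_integral_harmonicRemainder_le hx0))

lemma abs_le_mul_of_abs_sum_div_le {F : ℝ → ℝ} {B ρ : ℝ} (hρ0 : 0 ≤ ρ) (hρ1 : ρ < 1)
    (hF : ∀ z, 1 ≤ z → |∑ m ∈ sublevel (elemNorm N) z, F (z / elemNorm N m)| ≤ B * z ^ ρ)
    {x : ℝ} (hx : 1 ≤ x) : |F x| ≤ B * ((κ + K) / (1 - ρ)) * x := by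
  have hx0 : 0 < x := one_pos.trans_le hx
  have hB : 0 ≤ B := by simpa using (abs_nonneg _).trans (hF 1 le_rfl)
  have term_le : ∀ S ∈ sublevel (elemNorm N ∘ primeProduct) x, |(-1) ^ S.card *
      ∑ m ∈ sublevel (elemNorm N) (x / elemNorm N (primeProduct S)),
        F (x / elemNorm N (m + primeProduct S))| ≤
      B * x ^ ρ * elemNorm N (primeProduct S) ^ (-ρ) := by
    intro S hS
    have hSpos := H.elemNorm_pos (primeProduct S)
    have hz := (one_le_div hSpos).2 (H.finiteSublevels_primeProduct.mem_sublevel.1 hS)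
    simp only [elemNorm_add, mul_comm (elemNorm N _) (elemNorm N (primeProduct S)), ← div_div]
    rw [abs_mul, abs_pow, abs_neg, abs_one, one_pow, one_mul, Real.rpow_neg hSpos.le, mul_assoc,
      ← div_eq_mul_inv, ← Real.div_rpow hx0.le hSpos.le]
    exact hF _ hz
  have sum_le : partialSum (elemNorm N ∘ primeProduct)
      (fun S => elemNorm N (primeProduct S) ^ (-ρ)) x ≤ (κ + K) / (1 - ρ) * x ^ (1 - ρ) :=
    (H.finiteSublevels.partialSum_comp_le primeProduct_injective
      fun m => Real.rpow_nonneg (H.elemNorm_pos m).le _).trans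
      (H.partialSum_elemNorm_rpow_neg_le hρ0 hρ1 hx)
  have inversion := H.moebius_inversion hx fun m => F (x / elemNorm N m)
  rw [elemNorm_zero, div_one] at inversion
  calc |F x| ≤ ∑ S ∈ sublevel (elemNorm N ∘ primeProduct) x,
        B * x ^ ρ * elemNorm N (primeProduct S) ^ (-ρ) := by
        rw [inversion]
        exact (Finset.abs_sum_le_sum_abs _ _).trans (Finset.sum_le_sum term_le)
    _ ≤ B * x ^ ρ * ((κ + K) / (1 - ρ) * x ^ (1 - ρ)) := by
        rw [← Finset.mul_sum]; gcongr; exact sum_le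
    _ = B * ((κ + K) / (1 - ρ)) * (x ^ ρ * x ^ (1 - ρ)) := by ring
    _ = B * ((κ + K) / (1 - ρ)) * x := by
        rw [← Real.rpow_add hx0, add_sub_cancel, Real.rpow_one]

/- The constant `1 + c / κ` is chosen so that the main terms of the summatory functions of
`log N(m)`, `x / N(m)` and `1` cancel. -/
lemma exists_abs_sum_chebyshevPsi_sub_le : ∃ C B : ℝ, ∀ z, 1 ≤ z →
    |∑ m ∈ sublevel (elemNorm N) z,
      (chebyshevPsi N (z / elemNorm N m) - z / elemNorm N m + C)| ≤ B * z ^ ((1 + τ) / 2) := by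
  have hκ := H.density_pos
  obtain ⟨c, C₂, hC₂, hinv⟩ := H.exists_abs_partialSum_inv_sub_le
  refine ⟨1 + c / κ, (K * (2 / (1 - τ)) + κ + K / τ) + C₂ + |1 + c / κ| * K, fun z hz => ?_⟩
  have hz0 : 0 < z := one_pos.trans_le hz
  have hexp : z ^ τ ≤ z ^ ((1 + τ) / 2) := by gcongr; linarith [H.exponent_lt_one]
  have sum_eq : ∑ m ∈ sublevel (elemNorm N) z,
      (chebyshevPsi N (z / elemNorm N m) - z / elemNorm N m + (1 + c / κ)) =
      (partialSum (elemNorm N) (fun m => Real.log (elemNorm N m)) z - κ * z * Real.log z + κ * z) -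
      z * (partialSum (elemNorm N) (fun m => (elemNorm N m)⁻¹) z - κ * Real.log z - c) +
      (1 + c / κ) * (elementCount N z - κ * z) := by
    rw [Finset.sum_add_distrib, Finset.sum_sub_distrib, ← H.partialSum_log_eq_sum_chebyshevPsi]
    simp only [elementCount, partialSum, div_eq_mul_inv, ← Finset.mul_sum, Finset.sum_const,
      nsmul_eq_mul]
    field_simp
    ring
  have inv_le : |z * (partialSum (elemNorm N) (fun m => (elemNorm N m)⁻¹) z - κ * Real.log z - c)| ≤
      C₂ * z ^ ((1 + τ) / 2) := by
    rw [abs_mul, abs_of_pos hz0]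
    calc _ ≤ z * (C₂ * z ^ (τ - 1)) := by gcongr; exact hinv z hz
      _ = C₂ * z ^ τ := by rw [Real.rpow_sub_one hz0.ne']; field_simp
      _ ≤ _ := by gcongr
  have count_le : |(1 + c / κ) * (elementCount N z - κ * z)| ≤
      |1 + c / κ| * K * z ^ ((1 + τ) / 2) := by
    rw [abs_mul, mul_assoc]
    gcongr
    exact (H.abs_elementCount_sub_le z hz0).trans (mul_le_mul_of_nonneg_left hexp H.constant_nonneg)
  rw [sum_eq]
  refine ((abs_add_le _ _).trans (add_le_add ((abs_sub _ _).trans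
    (add_le_add (H.abs_partialSum_log_sub_le hz) inv_le)) count_le)).trans_eq ?_
  ring

theorem exists_chebyshevPsi_le : ∃ C, 0 ≤ C ∧ ∀ x, 1 ≤ x → chebyshevPsi N x ≤ C * x := by
  have hτ0 := H.exponent_pos
  have hτ1 := H.exponent_lt_one
  obtain ⟨C, B, hsum⟩ := H.exists_abs_sum_chebyshevPsi_sub_le
  set D := B * ((κ + K) / (1 - (1 + τ) / 2))
  have hpsi (x : ℝ) (hx : 1 ≤ x) : |chebyshevPsi N x - x + C| ≤ D * x :=
    H.abs_le_mul_of_abs_sum_div_le (F := fun z => chebyshevPsi N z - z + C) (by linarith)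
      (by linarith) hsum hx
  have hD : 0 ≤ D := by simpa using (abs_nonneg _).trans (hpsi 1 le_rfl)
  refine ⟨D + 1 + |C|, by positivity, fun x hx => ?_⟩
  have hC : |C| ≤ |C| * x := le_mul_of_one_le_right (abs_nonneg C) hx
  linarith [(abs_le.1 (hpsi x hx)).2, neg_abs_le C]

end UniformStar

end Chebyshev

/-! ### Mertens' first theorem and power sums over primes -/

section Mertens

variable {P : Type*} {N : P → ℕ} {κ τ K : ℝ}

/-- The summand `log N(p) / N(p)^(k+1)` of the Mertens sum over prime powers, at the pairs
`(p, k)` with `k ≥ 1`; it vanishes at the primes themselves. -/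
def higherPowerWeight (N : P → ℕ) (i : P × ℕ) : ℝ :=
  if i.2 = 0 then 0 else Real.log (primeNorm N i.1) * (elemNorm N (primePow i))⁻¹

lemma log_mul_inv_pow_le {q : ℝ} (hq : 2 ≤ q) (k : ℕ) :
    Real.log q * (q ^ (k + 2))⁻¹ ≤ 4 * (q ^ (-(3 / 2) : ℝ) * (1 / 2) ^ (k + 1)) := by
  have hq0 : 0 < q := two_pos.trans_le hq
  have hlog : Real.log q ≤ 2 * q ^ (1 / 2 : ℝ) := by
    linarith [Real.log_le_rpow_div hq0.le (by norm_num : (0 : ℝ) < 1 / 2)]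
  have hrpow : q ^ (1 / 2 : ℝ) * (q ^ 2)⁻¹ = q ^ (-(3 / 2) : ℝ) := by
    rw [← Real.rpow_natCast, ← Real.rpow_neg hq0.le, ← Real.rpow_add hq0]
    norm_num
  have hpow : (q ^ k)⁻¹ ≤ (1 / 2) ^ k := by
    rw [one_div, inv_pow]
    gcongr
  calc Real.log q * (q ^ (k + 2))⁻¹
      ≤ 2 * q ^ (1 / 2 : ℝ) * (q ^ (k + 2))⁻¹ := by gcongr
    _ = 2 * (q ^ (1 / 2 : ℝ) * (q ^ 2)⁻¹) * (q ^ k)⁻¹ := by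
        rw [pow_add, mul_inv]
        ring
    _ ≤ 2 * q ^ (-(3 / 2) : ℝ) * (1 / 2) ^ k := by
        rw [hrpow]
        gcongr
    _ = 4 * (q ^ (-(3 / 2) : ℝ) * (1 / 2) ^ (k + 1)) := by ring

namespace IsDiscreteNorm

variable (hN : IsDiscreteNorm N)
include hN

lemma higherPowerWeight_nonneg (i : P × ℕ) : 0 ≤ higherPowerWeight N i := by
  unfold higherPowerWeight
  split_ifs
  · exact le_rfl
  · exact mul_nonneg (hN.log_primeNorm_pos _).le (inv_nonneg.2 (hN.elemNorm_pos _).le)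

lemma sum_primePow_eq_add (x : ℝ) :
    ∑ i ∈ sublevel (elemNorm N ∘ primePow) x,
        Real.log (primeNorm N i.1) * (elemNorm N (primePow i))⁻¹ =
      partialSum (primeNorm N) (fun p => (primeNorm N p)⁻¹ * Real.log (primeNorm N p)) x +
        partialSum (elemNorm N ∘ primePow) (higherPowerWeight N) x := by
  have hprimes : (sublevel (elemNorm N ∘ primePow) x).filter (fun i => i.2 = 0) =
      (sublevel (primeNorm N) x).image fun p => (p, 0) := by
    ext ⟨p, k⟩
    simp only [Finset.mem_filter, Finset.mem_image, hN.finiteSublevels_primePow.mem_sublevel,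
      hN.finiteSublevels_primeNorm.mem_sublevel, Prod.mk.injEq, Function.comp_apply, primePow,
      elemNorm_single]
    constructor
    · rintro ⟨hp, rfl⟩
      exact ⟨p, by simpa using hp, rfl, rfl⟩
    · rintro ⟨_, hp, rfl, rfl⟩
      exact ⟨by simpa using hp, rfl⟩
  rw [← Finset.sum_filter_add_sum_filter_not _ (fun i => i.2 = 0)]
  congr 1
  · rw [hprimes, Finset.sum_image fun a _ b _ hab => (Prod.mk.inj hab).1]
    refine Finset.sum_congr rfl fun p _ => ?_
    rw [primePow, elemNorm_single, zero_add, pow_one, mul_comm]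
  · rw [Finset.sum_filter]
    refine Finset.sum_congr rfl fun i _ => ?_
    rw [higherPowerWeight, ite_not]

end IsDiscreteNorm

namespace UniformStar

variable (H : UniformStar N κ τ K)
include H

lemma summable_primeNorm_rpow_neg {σ : ℝ} (hσ : 1 < σ) :
    Summable fun p => primeNorm N p ^ (-σ) := by
  rw [primeNorm_eq_comp]
  exact (H.summable_elemNorm_rpow_neg hσ).comp_injective
    (Finsupp.single_left_injective one_ne_zero)

lemma summable_higherPowerWeight : Summable (higherPowerWeight N) := by
  have hmajorant := ((H.summable_primeNorm_rpow_neg (by norm_num : (1 : ℝ) < 3 / 2)).mul_of_nonneg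
    summable_geometric_two (fun p => Real.rpow_nonneg (H.primeNorm_pos p).le _)
    fun k => by positivity).mul_left 4
  refine hmajorant.of_nonneg_of_le H.higherPowerWeight_nonneg ?_
  rintro ⟨p, _ | k⟩
  · have := H.primeNorm_pos p
    simp only [higherPowerWeight, if_true]
    positivity
  · simpa only [higherPowerWeight, primePow, elemNorm_single, Nat.add_eq_zero_iff, one_ne_zero,
      and_false, if_false] using log_mul_inv_pow_le (H.two_le_primeNorm p) k

lemma abs_partialSum_log_sub_sum_primePow_le {C x : ℝ} (hC0 : 0 ≤ C)
    (hC : ∀ t, 1 ≤ t → chebyshevPsi N t ≤ C * t) (hx : 1 ≤ x) :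
    |partialSum (elemNorm N) (fun m => Real.log (elemNorm N m)) x -
      κ * x * ∑ i ∈ sublevel (elemNorm N ∘ primePow) x,
        Real.log (primeNorm N i.1) * (elemNorm N (primePow i))⁻¹| ≤ K * (C / (1 - τ)) * x := by
  have hx0 : 0 < x := one_pos.trans_le hx
  have hterm (i : P × ℕ) :
      |Real.log (primeNorm N i.1) * elementCount N (x / elemNorm N (primePow i)) -
        κ * x * (Real.log (primeNorm N i.1) * (elemNorm N (primePow i))⁻¹)| ≤
      K * x ^ τ * (Real.log (primeNorm N i.1) * elemNorm N (primePow i) ^ (-τ)) := by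
    have hlog := (H.log_primeNorm_pos i.1).le
    have hq := H.elemNorm_pos (primePow i)
    calc |Real.log (primeNorm N i.1) * elementCount N (x / elemNorm N (primePow i)) -
          κ * x * (Real.log (primeNorm N i.1) * (elemNorm N (primePow i))⁻¹)|
        = Real.log (primeNorm N i.1) * |elementCount N (x / elemNorm N (primePow i)) -
            κ * (x / elemNorm N (primePow i))| := by
          rw [← abs_of_nonneg hlog, ← abs_mul, abs_of_nonneg hlog, div_eq_mul_inv]
          ring_nf
      _ ≤ Real.log (primeNorm N i.1) * (K * (x / elemNorm N (primePow i)) ^ τ) := by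
          gcongr
          exact H.abs_elementCount_sub_le _ (by positivity)
      _ = K * x ^ τ * (Real.log (primeNorm N i.1) * elemNorm N (primePow i) ^ (-τ)) := by
          rw [Real.div_rpow hx0.le hq.le, Real.rpow_neg hq.le]
          ring
  rw [H.partialSum_log_eq_sum_primePow, Finset.mul_sum, ← Finset.sum_sub_distrib]
  calc _ ≤ ∑ i ∈ sublevel (elemNorm N ∘ primePow) x,
          K * x ^ τ * (Real.log (primeNorm N i.1) * elemNorm N (primePow i) ^ (-τ)) :=
        (Finset.abs_sum_le_sum_abs _ _).trans (Finset.sum_le_sum fun i _ => hterm i)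
    _ ≤ K * x ^ τ * (C / (1 - τ) * x ^ (1 - τ)) := by
        rw [← Finset.mul_sum]
        have := H.constant_nonneg
        gcongr
        exact H.finiteSublevels_primePow.partialSum_mul_rpow_neg_le_of_lt_one
          (fun i => H.one_le_elemNorm _) hC0 hC H.exponent_pos.le H.exponent_lt_one hx
    _ = K * (C / (1 - τ)) * x := by
        rw [mul_mul_mul_comm, ← Real.rpow_add hx0, add_sub_cancel, Real.rpow_one]

lemma abs_partialSum_log_sub_mul_log_le {x : ℝ} (hx : 1 ≤ x) :
    |partialSum (elemNorm N) (fun m => Real.log (elemNorm N m)) x - κ * x * Real.log x| ≤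
      (K * (2 / (1 - τ)) + κ + K / τ + κ) * x := by
  have hτ0 := H.exponent_pos
  have hτ1 : 0 < 1 - τ := sub_pos.2 H.exponent_lt_one
  have hκ := H.density_pos
  have hK := H.constant_nonneg
  have hκx : 0 < κ * x := mul_pos hκ (one_pos.trans_le hx)
  have hpow : x ^ ((1 + τ) / 2) ≤ x := by
    simpa only [Real.rpow_one] using
      Real.rpow_le_rpow_of_exponent_le hx (show (1 + τ) / 2 ≤ 1 by linarith)
  have hsum := (H.abs_partialSum_log_sub_le hx).trans
    (mul_le_mul_of_nonneg_left hpow (by positivity))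
  rw [abs_le] at hsum ⊢
  constructor <;> linarith

lemma exists_abs_sum_primePow_sub_log_le : ∃ C, ∀ x, 1 ≤ x →
    |∑ i ∈ sublevel (elemNorm N ∘ primePow) x,
      Real.log (primeNorm N i.1) * (elemNorm N (primePow i))⁻¹ - Real.log x| ≤ C := by
  obtain ⟨C, hC0, hC⟩ := H.exists_chebyshevPsi_le
  refine ⟨(K * (2 / (1 - τ)) + κ + K / τ + κ + K * (C / (1 - τ))) / κ, fun x hx => ?_⟩
  have hκx : 0 < κ * x := mul_pos H.density_pos (one_pos.trans_le hx)
  have hκ := H.density_pos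
  refine le_of_mul_le_mul_left ?_ hκx
  rw [← abs_of_pos hκx, ← abs_mul, abs_of_pos hκx, mul_sub, ← mul_div_assoc, le_div_iff₀ hκ]
  have hlog := H.abs_partialSum_log_sub_mul_log_le hx
  have hprimePow := H.abs_partialSum_log_sub_sum_primePow_le hC0 hC hx
  rw [abs_sub_comm] at hprimePow
  have htriangle := (abs_sub_le _ _ _).trans (add_le_add hprimePow hlog)
  refine (mul_le_mul_of_nonneg_right htriangle hκ.le).trans_eq ?_
  ring

theorem exists_abs_partialSum_log_div_sub_log_le : ∃ C, ∀ x, 1 ≤ x →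
    |partialSum (primeNorm N) (fun p => (primeNorm N p)⁻¹ * Real.log (primeNorm N p)) x -
      Real.log x| ≤ C := by
  obtain ⟨C, hC⟩ := H.exists_abs_sum_primePow_sub_log_le
  refine ⟨C + ∑' i, higherPowerWeight N i, fun x hx => ?_⟩
  have hle : partialSum (elemNorm N ∘ primePow) (higherPowerWeight N) x ≤
      ∑' i, higherPowerWeight N i :=
    H.summable_higherPowerWeight.sum_le_tsum _ fun i _ => H.higherPowerWeight_nonneg i
  have hge : 0 ≤ partialSum (elemNorm N ∘ primePow) (higherPowerWeight N) x :=
    partialSum_nonneg H.higherPowerWeight_nonneg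
  have hmertens := hC x hx
  rw [H.sum_primePow_eq_add] at hmertens
  rw [abs_le] at hmertens ⊢
  constructor <;> linarith

lemma partialSum_log_primeNorm_le_chebyshevPsi (t : ℝ) :
    partialSum (primeNorm N) (fun p => Real.log (primeNorm N p)) t ≤ chebyshevPsi N t := by
  have hinj : Function.Injective fun p : P => (p, 0) := fun a b hab => (Prod.mk.inj hab).1
  have hle := H.finiteSublevels_primePow.partialSum_comp_le (x := t) hinj
    (w := fun i => Real.log (primeNorm N i.1)) fun i => (H.log_primeNorm_pos i.1).le
  have hnorm : (elemNorm N ∘ primePow) ∘ (fun p : P => (p, 0)) = primeNorm N := by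
    funext p
    simp [primePow, elemNorm_single]
  rwa [hnorm] at hle

lemma primeNorm_rpow_neg_le_ite_add {σ z : ℝ} (hz : 1 < z) (p : P) :
    primeNorm N p ^ (-σ) ≤ (if primeNorm N p ≤ z ^ (1 / 2 : ℝ) then primeNorm N p ^ (-σ) else 0) +
      2 / Real.log z * (Real.log (primeNorm N p) * primeNorm N p ^ (-σ)) := by
  have hp := H.primeNorm_pos p
  have hlog := H.log_primeNorm_pos p
  have hlogz := Real.log_pos hz
  split_ifs with hpz
  · exact le_add_of_nonneg_right (by positivity)
  · have hz0 : 0 < z := one_pos.trans hz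
    have hlt : 1 / 2 * Real.log z < Real.log (primeNorm N p) := by
      rw [← Real.log_rpow hz0]
      exact Real.log_lt_log (by positivity) (not_le.1 hpz)
    rw [zero_add, ← mul_assoc]
    refine le_mul_of_one_le_left (by positivity) ?_
    rw [div_mul_eq_mul_div, one_le_div hlogz]
    linarith

lemma partialSum_ite_primeNorm_rpow_neg_le {σ z : ℝ} (hσ0 : 0 ≤ σ) (hσ1 : σ < 1) (hz : 1 < z) :
    partialSum (primeNorm N)
        (fun p => if primeNorm N p ≤ z ^ (1 / 2 : ℝ) then primeNorm N p ^ (-σ) else 0) z ≤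
      (κ + K) / (1 - σ) * (2 / (1 - σ)) * (z ^ (1 - σ) / Real.log z) := by
  have hz0 : 0 < z := one_pos.trans hz
  have hlogz := Real.log_pos hz
  have hσ : 0 < 1 - σ := sub_pos.2 hσ1
  have hκK := H.density_add_constant_nonneg
  have hlog_le : Real.log z ≤ z ^ ((1 - σ) / 2) / ((1 - σ) / 2) :=
    Real.log_le_rpow_div hz0.le (by linarith)
  have hnonneg (m : P →₀ ℕ) : 0 ≤ elemNorm N m ^ (-σ) := Real.rpow_nonneg (H.elemNorm_pos m).le _
  have hfilter : (sublevel (primeNorm N) z).filter (fun p => primeNorm N p ≤ z ^ (1 / 2 : ℝ)) ⊆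
      sublevel (primeNorm N) (z ^ (1 / 2 : ℝ)) := fun p hp =>
    H.finiteSublevels_primeNorm.mem_sublevel.2 (Finset.mem_filter.1 hp).2
  calc _ = ∑ p ∈ sublevel (primeNorm N) z with primeNorm N p ≤ z ^ (1 / 2 : ℝ),
          primeNorm N p ^ (-σ) := (Finset.sum_filter _ _).symm
    _ ≤ partialSum (primeNorm N) (fun p => primeNorm N p ^ (-σ)) (z ^ (1 / 2 : ℝ)) :=
        Finset.sum_le_sum_of_subset_of_nonneg hfilter fun p _ _ =>
          Real.rpow_nonneg (H.primeNorm_pos p).le _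
    _ ≤ partialSum (elemNorm N) (fun m => elemNorm N m ^ (-σ)) (z ^ (1 / 2 : ℝ)) := by
        rw [primeNorm_eq_comp]
        exact H.finiteSublevels.partialSum_comp_le (Finsupp.single_left_injective one_ne_zero)
          hnonneg
    _ ≤ (κ + K) / (1 - σ) * (z ^ (1 / 2 : ℝ)) ^ (1 - σ) :=
        H.partialSum_elemNorm_rpow_neg_le hσ0 hσ1 (Real.one_le_rpow hz.le (by norm_num))
    _ ≤ (κ + K) / (1 - σ) * (2 / (1 - σ) * (z ^ (1 - σ) / Real.log z)) := by
        gcongr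
        rw [← mul_div_assoc, le_div_iff₀ hlogz, ← Real.rpow_mul hz0.le, one_div_mul_eq_div]
        calc z ^ ((1 - σ) / 2) * Real.log z
            ≤ z ^ ((1 - σ) / 2) * (z ^ ((1 - σ) / 2) / ((1 - σ) / 2)) := by gcongr
          _ = 2 / (1 - σ) * (z ^ ((1 - σ) / 2) * z ^ ((1 - σ) / 2)) := by field_simp
          _ = 2 / (1 - σ) * z ^ (1 - σ) := by rw [← Real.rpow_add hz0, add_halves]
    _ = _ := (mul_assoc _ _ _).symm

theorem exists_partialSum_primeNorm_rpow_neg_le {σ : ℝ} (hσ0 : 0 ≤ σ) (hσ1 : σ < 1) :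
    ∃ C, 0 ≤ C ∧ ∀ z, 1 < z →
      partialSum (primeNorm N) (fun p => primeNorm N p ^ (-σ)) z ≤
        C * (z ^ (1 - σ) / Real.log z) := by
  obtain ⟨C, hC0, hC⟩ := H.exists_chebyshevPsi_le
  have : 0 < 1 - σ := sub_pos.2 hσ1
  have := H.density_add_constant_nonneg
  refine ⟨(κ + K) / (1 - σ) * (2 / (1 - σ)) + 2 * (C / (1 - σ)), by positivity, fun z hz => ?_⟩
  have hlogz := Real.log_pos hz
  have htheta := H.finiteSublevels_primeNorm.partialSum_mul_rpow_neg_le_of_lt_one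
    H.one_le_primeNorm hC0
    (fun t ht => (H.partialSum_log_primeNorm_le_chebyshevPsi t).trans (hC t ht)) hσ0 hσ1 hz.le
  calc partialSum (primeNorm N) (fun p => primeNorm N p ^ (-σ)) z
      ≤ partialSum (primeNorm N)
          (fun p => if primeNorm N p ≤ z ^ (1 / 2 : ℝ) then primeNorm N p ^ (-σ) else 0) z +
        2 / Real.log z * partialSum (primeNorm N)
          (fun p => Real.log (primeNorm N p) * primeNorm N p ^ (-σ)) z := by
        simp only [partialSum, Finset.mul_sum, ← Finset.sum_add_distrib]
        exact Finset.sum_le_sum fun p _ => H.primeNorm_rpow_neg_le_ite_add hz p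
    _ ≤ (κ + K) / (1 - σ) * (2 / (1 - σ)) * (z ^ (1 - σ) / Real.log z) +
        2 / Real.log z * (C / (1 - σ) * z ^ (1 - σ)) := by
        gcongr
        exact H.partialSum_ite_primeNorm_rpow_neg_le hσ0 hσ1 hz
    _ = _ := by ring

end UniformStar

end Mertens

/-! ### Mertens weights -/

section MertensWeight

open MeasureTheory

variable {ι : Type*} {ν f : ι → ℝ} {C x : ℝ}

/-- The error `∑_{ν i ≤ t} f i log (ν i) - log t` in Mertens' first theorem for the weight `f`. -/
def mertensError (ν f : ι → ℝ) (t : ℝ) : ℝ :=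
  partialSum ν (fun i => f i * Real.log (ν i)) t - Real.log t

/-- A nonnegative weight on indices of size `ν i ≥ 2` satisfying Mertens' first theorem with an
error of size at most `C`. -/
structure MertensWeight (ν f : ι → ℝ) (C : ℝ) : Prop where
  finiteSublevels : FiniteSublevels ν
  two_le : ∀ i, 2 ≤ ν i
  nonneg : ∀ i, 0 ≤ f i
  abs_error_le : ∀ x, 1 ≤ x → |mertensError ν f x| ≤ C

lemma intervalIntegrable_mul_log {g' : ℝ → ℝ} {b : ℝ} (hb : 0 < b) (hbx : b ≤ x)
    (hg' : ContinuousOn g' (Set.Icc b x)) :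
    IntervalIntegrable (fun t => g' t * Real.log t) volume b x := by
  refine ContinuousOn.intervalIntegrable ?_
  rw [Set.uIcc_of_le hbx]
  exact hg'.mul (Real.continuousOn_log.mono fun t ht => (hb.trans_le ht.1).ne')

namespace MertensWeight

variable (W : MertensWeight ν f C)
include W

lemma log_pos (i : ι) : 0 < Real.log (ν i) := Real.log_pos (one_lt_two.trans_le (W.two_le i))

lemma one_le (i : ι) : 1 ≤ ν i := one_le_two.trans (W.two_le i)

lemma constant_nonneg : 0 ≤ C := (abs_nonneg _).trans (W.abs_error_le 1 le_rfl)

lemma sublevel_one : sublevel ν 1 = ∅ :=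
  Finset.eq_empty_of_forall_notMem fun i hi =>
    (one_lt_two.trans_le (W.two_le i)).not_ge (W.finiteSublevels.mem_sublevel.1 hi)

section Abel

variable {g g' G : ℝ → ℝ} {a b : ℝ}

lemma intervalIntegrable_mul_error (hb : 0 < b) (hbx : b ≤ x)
    (hg' : ContinuousOn g' (Set.Icc b x)) :
    IntervalIntegrable (fun t => g' t * mertensError ν f t) volume b x := by
  simp only [mertensError, mul_sub]
  exact (W.finiteSublevels.intervalIntegrable_mul_partialSum hbx
    (hg'.intervalIntegrable_of_Icc hbx)).sub (intervalIntegrable_mul_log hb hbx hg')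

lemma partialSum_sub_eq_sub_integral (hb : 0 < b) (hbν : ∀ i, b ≤ ν i) (hbx : b ≤ x)
    (hg : ∀ t ∈ Set.Icc b x, HasDerivAt g (g' t) t) (hg' : ContinuousOn g' (Set.Icc b x))
    (hG : ∀ t ∈ Set.Icc b x, HasDerivAt G (g t / t) t) :
    partialSum ν (fun i => f i * Real.log (ν i) * g (ν i)) x - G x =
      g x * mertensError ν f x - (∫ t in b..x, g' t * mertensError ν f t) +
        (g b * Real.log b - G b) := by
  have hfint := hg'.intervalIntegrable_of_Icc (μ := volume) hbx
  have hlog := intervalIntegrable_mul_log hb hbx hg'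
  have integral_log : ∫ t in b..x, g' t * Real.log t =
      g x * Real.log x - G x - (g b * Real.log b - G b) := by
    refine intervalIntegral.integral_eq_sub_of_hasDerivAt
      (f := fun t => g t * Real.log t - G t) (fun t ht => ?_) hlog
    rw [Set.uIcc_of_le hbx] at ht
    have hderiv := ((hg t ht).fun_mul (Real.hasDerivAt_log (hb.trans_le ht.1).ne')).fun_sub
      (hG t ht)
    exact hderiv.congr_deriv (by ring)
  simp only [mertensError, mul_sub]
  rw [W.finiteSublevels.sum_mul_eq_sub_integral hbx hbν hg hfint,
    intervalIntegral.integral_sub (W.finiteSublevels.intervalIntegrable_mul_partialSum hbx hfint)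
      hlog, integral_log]
  ring

lemma abs_integral_mul_error_le {s : ℝ} (ha : 1 ≤ a) (hax : a ≤ x)
    (hg : ∀ t ∈ Set.Icc a x, HasDerivAt g (g' t) t) (hg' : ContinuousOn g' (Set.Icc a x))
    (hs : ∀ t ∈ Set.Icc a x, |g' t| = s * g' t) :
    |∫ t in a..x, g' t * mertensError ν f t| ≤ C * (s * (g x - g a)) := by
  have hfint := hg'.intervalIntegrable_of_Icc (μ := volume) hax
  calc |∫ t in a..x, g' t * mertensError ν f t|
      ≤ ∫ t in a..x, C * (s * g' t) := by
        rw [← Real.norm_eq_abs]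
        refine intervalIntegral.norm_integral_le_of_norm_le hax ?_ ((hfint.const_mul s).const_mul C)
        filter_upwards with t ht
        rw [Real.norm_eq_abs, abs_mul, hs t ⟨ht.1.le, ht.2⟩, mul_comm]
        refine mul_le_mul_of_nonneg_right (W.abs_error_le t (ha.trans ht.1.le)) ?_
        exact hs t ⟨ht.1.le, ht.2⟩ ▸ abs_nonneg _
    _ = C * (s * (g x - g a)) := by
        rw [intervalIntegral.integral_const_mul, intervalIntegral.integral_const_mul,
          intervalIntegral.integral_eq_sub_of_hasDerivAt (f := g) _ hfint]
        simpa only [Set.uIcc_of_le hax] using hg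

/- The sign `s = ±1` says whether `g` increases or decreases. -/
lemma abs_partialSum_sub_sub_le {s : ℝ} (hb : 1 ≤ b) (hbν : ∀ i, b ≤ ν i) (hba : b ≤ a)
    (hax : a ≤ x) (hg : ∀ t ∈ Set.Icc b x, HasDerivAt g (g' t) t)
    (hg' : ContinuousOn g' (Set.Icc b x)) (hs : ∀ t ∈ Set.Icc b x, |g' t| = s * g' t)
    (hG : ∀ t ∈ Set.Icc b x, HasDerivAt G (g t / t) t) :
    |(partialSum ν (fun i => f i * Real.log (ν i) * g (ν i)) x - G x) -
      (partialSum ν (fun i => f i * Real.log (ν i) * g (ν i)) a - G a)| ≤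
      C * (|g x| + |g a| + s * (g x - g a)) := by
  have hb0 : 0 < b := one_pos.trans_le hb
  have hbx := hba.trans hax
  have hsub_a : Set.Icc b a ⊆ Set.Icc b x := Set.Icc_subset_Icc_right hax
  have hsub_x : Set.Icc a x ⊆ Set.Icc b x := Set.Icc_subset_Icc_left hba
  have integral_sub : (∫ t in b..x, g' t * mertensError ν f t) -
      (∫ t in b..a, g' t * mertensError ν f t) = ∫ t in a..x, g' t * mertensError ν f t :=
    intervalIntegral.integral_interval_sub_left (W.intervalIntegrable_mul_error hb0 hbx hg')
      (W.intervalIntegrable_mul_error hb0 hba (hg'.mono hsub_a))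
  have error_le {t : ℝ} (ht : b ≤ t) : |g t * mertensError ν f t| ≤ C * |g t| := by
    rw [abs_mul, mul_comm]
    exact mul_le_mul_of_nonneg_right (W.abs_error_le t (hb.trans ht)) (abs_nonneg _)
  have integral_le := W.abs_integral_mul_error_le (hb.trans hba) hax
    (fun t ht => hg t (hsub_x ht)) (hg'.mono hsub_x) fun t ht => hs t (hsub_x ht)
  rw [W.partialSum_sub_eq_sub_integral hb0 hbν hbx hg hg' hG,
    W.partialSum_sub_eq_sub_integral hb0 hbν hba (fun t ht => hg t (hsub_a ht)) (hg'.mono hsub_a)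
      fun t ht => hG t (hsub_a ht)]
  have error_x := error_le hbx
  have error_a := error_le hba
  rw [abs_le] at *
  constructor <;> linarith

end Abel

lemma abs_partialSum_sub_loglog_sub_le {a : ℝ} (ha : 2 ≤ a) (hax : a ≤ x) :
    |(partialSum ν f x - Real.log (Real.log x)) - (partialSum ν f a - Real.log (Real.log a))| ≤
      2 * C / Real.log a := by
  have hpos {u : ℝ} (hu : 2 ≤ u) : 0 < u ∧ 0 < Real.log u :=
    ⟨two_pos.trans_le hu, Real.log_pos (one_lt_two.trans_le hu)⟩
  have hcompare := W.abs_partialSum_sub_sub_le (x := x) (g := fun u => (Real.log u)⁻¹)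
    (g' := fun u => -u⁻¹ / Real.log u ^ 2) (G := fun u => Real.log (Real.log u)) (s := -1)
    one_le_two W.two_le ha hax
    (fun u hu => (Real.hasDerivAt_log (hpos hu.1).1.ne').inv (hpos hu.1).2.ne')
    (fun u hu => (((continuousAt_inv₀ (hpos hu.1).1.ne').neg).div
      ((Real.continuousAt_log (hpos hu.1).1.ne').pow 2)
      (pow_ne_zero 2 (hpos hu.1).2.ne')).continuousWithinAt)
    (fun u hu => by
      have := hpos hu.1
      rw [neg_div, abs_neg, neg_one_mul, neg_neg, abs_of_pos (div_pos (inv_pos.2 this.1)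
        (pow_pos this.2 2))])
    (fun u hu => ((Real.hasDerivAt_log (hpos hu.1).1.ne').log (hpos hu.1).2.ne').congr_deriv
      (by rw [div_eq_mul_inv, div_eq_mul_inv, mul_comm]))
  simp only [mul_assoc, mul_inv_cancel₀ (W.log_pos _).ne', mul_one,
    abs_of_pos (inv_pos.2 (hpos ha).2), abs_of_pos (inv_pos.2 (hpos (ha.trans hax)).2)] at hcompare
  exact hcompare.trans_eq (by ring)

theorem abs_partialSum_sub_loglog_sub_le_of_tendsto {D : ℝ}
    (hD : Tendsto (fun t => partialSum ν f t - Real.log (Real.log t)) atTop (𝓝 D))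
    {t : ℝ} (ht : 2 ≤ t) :
    |partialSum ν f t - Real.log (Real.log t) - D| ≤ 2 * C / Real.log t := by
  rw [abs_sub_comm]
  exact le_of_tendsto (hD.sub_const _).abs
    (eventually_atTop.2 ⟨t, fun x hx => W.abs_partialSum_sub_loglog_sub_le ht hx⟩)

theorem abs_partialSum_log_pow_sub_le (k : ℕ) (hx : 1 ≤ x) :
    |partialSum ν (fun i => f i * Real.log (ν i) ^ (k + 1)) x - Real.log x ^ (k + 1) / (k + 1)| ≤
      2 * C * Real.log x ^ k := by
  have hpos {u : ℝ} (hu : 1 ≤ u) : 0 < u := one_pos.trans_le hu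
  have hcompare := W.abs_partialSum_sub_sub_le (x := x) (g := fun u => Real.log u ^ k)
    (g' := fun u => k * Real.log u ^ (k - 1) * u⁻¹)
    (G := fun u => Real.log u ^ (k + 1) / (k + 1)) (s := 1) le_rfl W.one_le le_rfl hx
    (fun u hu => (Real.hasDerivAt_log (hpos hu.1).ne').fun_pow k)
    (fun u hu => ((continuousAt_const.mul ((Real.continuousAt_log (hpos hu.1).ne').pow _)).mul
      (continuousAt_inv₀ (hpos hu.1).ne')).continuousWithinAt)
    (fun u hu => by
      have := hpos hu.1
      have := Real.log_nonneg hu.1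
      rw [one_mul, abs_of_nonneg (by positivity)])
    (fun u hu => by
      have hderiv := ((Real.hasDerivAt_log (hpos hu.1).ne').fun_pow (k + 1)).div_const ((k : ℝ) + 1)
      refine hderiv.congr_deriv ?_
      push_cast
      have : (k : ℝ) + 1 ≠ 0 := by positivity
      field_simp)
  simp only [mul_assoc, ← pow_succ', partialSum, W.sublevel_one, Finset.sum_empty, Real.log_one,
    zero_pow k.succ_ne_zero, zero_div, sub_zero, one_mul,
    abs_of_nonneg (pow_nonneg (Real.log_nonneg hx) k),
    abs_of_nonneg (pow_nonneg (le_refl (0 : ℝ)) k)] at hcompare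
  exact hcompare.trans_eq (by ring)

end MertensWeight

end MertensWeight

/-! ### The dilogarithm -/

section Dilogarithm

/-- Euler's dilogarithm `Li₂(x) = ∑_{k ≥ 1} x^k / k²`, meaningful for `|x| ≤ 1`. -/
def dilogarithm (x : ℝ) : ℝ := ∑' k : ℕ, x ^ (k + 1) / ((k : ℝ) + 1) ^ 2

lemma summable_one_div_succ_sq : Summable fun k : ℕ => 1 / ((k : ℝ) + 1) ^ 2 := by
  simpa using (summable_nat_add_iff 1).2 hasSum_zeta_two.summable

lemma dilogarithm_zero : dilogarithm 0 = 0 := by simp [dilogarithm]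

lemma dilogarithm_one : dilogarithm 1 = Real.pi ^ 2 / 6 := by
  have hshift := hasSum_zeta_two.summable.tsum_eq_zero_add
  rw [hasSum_zeta_two.tsum_eq] at hshift
  rw [dilogarithm, hshift]
  simp

lemma continuousOn_dilogarithm : ContinuousOn dilogarithm (Set.Icc 0 1) := by
  refine continuousOn_tsum (fun k => by fun_prop) summable_one_div_succ_sq fun k x hx => ?_
  rw [Real.norm_eq_abs, abs_of_nonneg (div_nonneg (pow_nonneg hx.1 _) (by positivity))]
  gcongr
  exact pow_le_one₀ hx.1 hx.2

lemma hasDerivAt_dilogarithm {x : ℝ} (hx0 : 0 < x) (hx1 : x < 1) :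
    HasDerivAt dilogarithm (-Real.log (1 - x) / x) x := by
  obtain ⟨r, hxr, hr1⟩ := exists_between hx1
  have hr0 : 0 < r := hx0.trans hxr
  have hderiv (k : ℕ) (y : ℝ) :
      HasDerivAt (fun y : ℝ => y ^ (k + 1) / ((k : ℝ) + 1) ^ 2) (y ^ k / ((k : ℝ) + 1)) y := by
    refine ((hasDerivAt_pow (k + 1) y).div_const (((k : ℝ) + 1) ^ 2)).congr_deriv ?_
    push_cast
    field_simp
  have hbound (k : ℕ) {y : ℝ} (hy : y ∈ Set.Ioo (-r) r) : ‖y ^ k / ((k : ℝ) + 1)‖ ≤ r ^ k := by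
    have : |y| ≤ r := abs_le.2 ⟨hy.1.le, hy.2.le⟩
    rw [Real.norm_eq_abs, abs_div, abs_pow, abs_of_pos (by positivity : (0 : ℝ) < (k : ℝ) + 1)]
    exact (div_le_self (by positivity) (by linarith [Nat.cast_nonneg (α := ℝ) k])).trans
      (by gcongr)
  have htsum := hasDerivAt_tsum_of_isPreconnected (summable_geometric_of_lt_one hr0.le hr1)
    isOpen_Ioo isPreconnected_Ioo (fun k y _ => hderiv k y) (fun k y hy => hbound k hy)
    (y₀ := 0) ⟨neg_lt_zero.2 hr0, hr0⟩ (by simp) (y := x) ⟨by linarith, hxr⟩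
  have hlog := Real.hasSum_pow_div_log_of_abs_lt_one (by rwa [abs_of_pos hx0])
  refine htsum.congr_deriv ?_
  rw [← (hlog.div_const x).tsum_eq]
  refine tsum_congr fun k => ?_
  rw [pow_succ]
  field_simp

lemma tendsto_log_mul_log_one_sub :
    Tendsto (fun x : ℝ => Real.log x * Real.log (1 - x)) (𝓝[>] 0) (𝓝 0) := by
  have hlim : Tendsto (fun x : ℝ => -2 * (Real.log x * x)) (𝓝[>] 0) (𝓝 0) := by
    simpa using (tendsto_log_mul_rpow_nhdsGT_zero one_pos).const_mul (-2)
  have hhalf : Set.Ioo (0 : ℝ) (1 / 2) ∈ 𝓝[>] (0 : ℝ) := Ioo_mem_nhdsGT (by norm_num)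
  refine squeeze_zero' ?_ ?_ hlim
  · filter_upwards [hhalf] with x hx
    exact mul_nonneg_of_nonpos_of_nonpos (Real.log_nonpos hx.1.le (by linarith [hx.2]))
      (Real.log_nonpos (by linarith [hx.2]) (by linarith [hx.1]))
  · filter_upwards [hhalf] with x hx
    have hx1 : 0 < 1 - x := by linarith [hx.2]
    have hinv : (1 - x)⁻¹ ≤ 1 + 2 * x := by
      rw [inv_le_iff_one_le_mul₀ hx1]
      nlinarith [hx.1, hx.2]
    have hlog : -2 * x ≤ Real.log (1 - x) := by
      linarith [Real.one_sub_inv_le_log_of_pos hx1]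
    nlinarith [Real.log_nonpos hx.1.le (by linarith [hx.2])]

lemma hasDerivAt_dilogarithm_reflection {x : ℝ} (hx : x ∈ Set.Ioo (0 : ℝ) 1) :
    HasDerivAt (fun x => dilogarithm x + dilogarithm (1 - x) + Real.log x * Real.log (1 - x))
      0 x := by
  have hx1 : 0 < 1 - x := sub_pos.2 hx.2
  have hsub : HasDerivAt (fun x : ℝ => 1 - x) (-1) x := (hasDerivAt_id x).const_sub 1
  have hdilog := (hasDerivAt_dilogarithm hx1 (sub_lt_self 1 hx.1)).comp x hsub
  have hlog := (Real.hasDerivAt_log hx.1.ne').fun_mul ((Real.hasDerivAt_log hx1.ne').comp x hsub)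
  refine (((hasDerivAt_dilogarithm hx.1 hx.2).fun_add hdilog).fun_add hlog).congr_deriv ?_
  have := hx.1.ne'
  simp only [Function.comp_def, sub_sub_cancel]
  field_simp
  ring

lemma tendsto_dilogarithm_reflection :
    Tendsto (fun x => dilogarithm x + dilogarithm (1 - x) + Real.log x * Real.log (1 - x))
      (𝓝[>] 0) (𝓝 (Real.pi ^ 2 / 6)) := by
  have hunit : Set.Icc (0 : ℝ) 1 ∈ 𝓝[>] (0 : ℝ) := Icc_mem_nhdsGT one_pos
  have hzero : Tendsto dilogarithm (𝓝[>] 0) (𝓝 0) := by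
    have hcont := continuousOn_dilogarithm 0 ⟨le_rfl, zero_le_one⟩
    rw [ContinuousWithinAt, dilogarithm_zero] at hcont
    exact hcont.mono_left (nhdsWithin_le_iff.2 hunit)
  have hone : Tendsto (fun x => dilogarithm (1 - x)) (𝓝[>] 0) (𝓝 (Real.pi ^ 2 / 6)) := by
    have hcont := continuousOn_dilogarithm 1 ⟨zero_le_one, le_rfl⟩
    rw [ContinuousWithinAt, dilogarithm_one] at hcont
    refine hcont.comp (tendsto_nhdsWithin_iff.2 ⟨?_, ?_⟩)
    · exact ((continuous_sub_left (1 : ℝ)).tendsto' 0 1 (sub_zero 1)).mono_left nhdsWithin_le_nhds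
    · filter_upwards [hunit] with x hx
      exact ⟨sub_nonneg.2 hx.2, sub_le_self 1 hx.1⟩
  simpa using (hzero.add hone).add tendsto_log_mul_log_one_sub

lemma dilogarithm_reflection {x : ℝ} (hx : x ∈ Set.Ioo (0 : ℝ) 1) :
    dilogarithm x + dilogarithm (1 - x) + Real.log x * Real.log (1 - x) = Real.pi ^ 2 / 6 := by
  refine tendsto_nhds_unique (tendsto_const_nhds.congr' ?_) tendsto_dilogarithm_reflection
  filter_upwards [Ioo_mem_nhdsGT one_pos] with y hy
  exact isOpen_Ioo.is_const_of_deriv_eq_zero isPreconnected_Ioo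
    (fun z hz => (hasDerivAt_dilogarithm_reflection hz).differentiableAt.differentiableWithinAt)
    (fun z hz => (hasDerivAt_dilogarithm_reflection hz).deriv) hx hy

lemma dilogarithm_half : dilogarithm (1 / 2) = Real.pi ^ 2 / 12 - Real.log 2 ^ 2 / 2 := by
  have hreflect := dilogarithm_reflection (x := 1 / 2) ⟨by norm_num, by norm_num⟩
  rw [sub_half, one_div, Real.log_inv] at hreflect
  rw [one_div]
  linarith

end Dilogarithm

/-! ### Pair sums by the hyperbola method -/

section PairSum

variable {ι : Type*} {ν f : ι → ℝ} {s : ℝ}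

/-- The sum `∑ f i f j` over all pairs `(i, j)` with `ν i ν j ≤ y`. Restricting both indices to the
sublevel set of `y` loses nothing as long as `1 ≤ ν`. -/
def pairSum (ν f : ι → ℝ) (y : ℝ) : ℝ :=
  ∑ i ∈ sublevel ν y, ∑ j ∈ sublevel ν y, if ν i * ν j ≤ y then f i * f j else 0

lemma pairSum_nonneg (hf : ∀ i, 0 ≤ f i) (y : ℝ) : 0 ≤ pairSum ν f y := by
  refine Finset.sum_nonneg fun i _ => Finset.sum_nonneg fun j _ => ?_
  split_ifs
  exacts [mul_nonneg (hf i) (hf j), le_rfl]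

namespace FiniteSublevels

variable (hν : FiniteSublevels ν)
include hν

lemma sum_ite_mul_le_and_le_left (hν1 : ∀ i, 1 ≤ ν i) (hs : 1 ≤ s) :
    (∑ i ∈ sublevel ν (s * s), ∑ j ∈ sublevel ν (s * s),
      if ν i * ν j ≤ s * s ∧ ν i ≤ s then f i * f j else 0) =
      ∑ i ∈ sublevel ν s, f i * partialSum ν f (s * s / ν i) := by
  have hs0 : 0 < s := one_pos.trans_le hs
  rw [← Finset.sum_subset (hν.sublevel_subset (le_mul_of_one_le_left hs0.le hs))]
  · refine Finset.sum_congr rfl fun i hi => ?_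
    have hi0 : 0 < ν i := one_pos.trans_le (hν1 i)
    have hsub : sublevel ν (s * s / ν i) ⊆ sublevel ν (s * s) :=
      hν.sublevel_subset (div_le_self (mul_nonneg hs0.le hs0.le) (hν1 i))
    rw [partialSum, Finset.mul_sum, ← Finset.sum_subset hsub]
    · refine Finset.sum_congr rfl fun j hj => if_pos ⟨?_, hν.mem_sublevel.1 hi⟩
      exact (le_div_iff₀' hi0).1 (hν.mem_sublevel.1 hj)
    · intro j _ hj
      exact if_neg fun hij => hj (hν.mem_sublevel.2 ((le_div_iff₀' hi0).2 hij.1))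
  · intro i _ hi
    exact Finset.sum_eq_zero fun j _ => if_neg fun hij => hi (hν.mem_sublevel.2 hij.2)

lemma sum_ite_mul_le_and_le_right (hν1 : ∀ i, 1 ≤ ν i) (hs : 1 ≤ s) :
    (∑ i ∈ sublevel ν (s * s), ∑ j ∈ sublevel ν (s * s),
      if ν i * ν j ≤ s * s ∧ ν j ≤ s then f i * f j else 0) =
      ∑ i ∈ sublevel ν s, f i * partialSum ν f (s * s / ν i) := by
  rw [← hν.sum_ite_mul_le_and_le_left hν1 hs, Finset.sum_comm]
  simp only [mul_comm]

lemma sum_ite_le_and_le {y : ℝ} (hsy : s ≤ y) :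
    (∑ i ∈ sublevel ν y, ∑ j ∈ sublevel ν y, if ν i ≤ s ∧ ν j ≤ s then f i * f j else 0) =
      partialSum ν f s ^ 2 := by
  have hfilter : (sublevel ν y).filter (fun i => ν i ≤ s) = sublevel ν s := by
    ext i
    simp only [Finset.mem_filter, hν.mem_sublevel, and_iff_right_iff_imp]
    exact fun hi => hi.trans hsy
  rw [sq, partialSum, Finset.sum_mul_sum, ← hfilter, Finset.sum_filter]
  refine Finset.sum_congr rfl fun i _ => ?_
  by_cases hi : ν i ≤ s
  · simp only [hi, true_and, if_true, Finset.sum_filter]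
  · simp [hi]

theorem pairSum_mul_self (hν1 : ∀ i, 1 ≤ ν i) (hs : 1 ≤ s) :
    pairSum ν f (s * s) =
      2 * (∑ i ∈ sublevel ν s, f i * partialSum ν f (s * s / ν i)) - partialSum ν f s ^ 2 := by
  have hs0 : 0 < s := one_pos.trans_le hs
  have inclusion_exclusion (i j : ι) :
      (if ν i * ν j ≤ s * s then f i * f j else 0) =
        ((if ν i * ν j ≤ s * s ∧ ν i ≤ s then f i * f j else 0) +
          if ν i * ν j ≤ s * s ∧ ν j ≤ s then f i * f j else 0) -
        if ν i ≤ s ∧ ν j ≤ s then f i * f j else 0 := by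
    have hj0 : 0 ≤ ν j := zero_le_one.trans (hν1 j)
    by_cases hi : ν i ≤ s <;> by_cases hj : ν j ≤ s
    · simp [hi, hj, mul_le_mul hi hj hj0 hs0.le]
    · simp [hi, hj]
    · simp [hi, hj]
    · simp [hi, hj, mul_lt_mul'' (not_le.1 hi) (not_le.1 hj) hs0.le hs0.le]
  simp only [pairSum, inclusion_exclusion, Finset.sum_sub_distrib, Finset.sum_add_distrib]
  rw [hν.sum_ite_mul_le_and_le_left hν1 hs, hν.sum_ite_mul_le_and_le_right hν1 hs,
    hν.sum_ite_le_and_le (le_mul_of_one_le_left hs0.le hs), two_mul]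

end FiniteSublevels

end PairSum

section LogLog

lemma tendsto_loglog_atTop : Tendsto (fun y => Real.log (Real.log y)) atTop atTop :=
  Real.tendsto_log_atTop.comp Real.tendsto_log_atTop

lemma isBigO_const_loglog (c : ℝ) :
    (fun _ : ℝ => c) =O[atTop] fun y => Real.log (Real.log y) :=
  (isLittleO_const_left.2 (Or.inr (tendsto_norm_atTop_atTop.comp tendsto_loglog_atTop))).isBigO

lemma isBigO_inv_log_loglog_div_log :
    (fun y => (Real.log y)⁻¹) =O[atTop] fun y => Real.log (Real.log y) / Real.log y := by
  simpa only [one_mul, div_eq_mul_inv] using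
    (isBigO_const_loglog 1).mul (isBigO_refl (fun y => (Real.log y)⁻¹) atTop)

lemma loglog_rpow {c y : ℝ} (hc : c ≠ 0) (hy : 1 < y) :
    Real.log (Real.log (y ^ c)) = Real.log (Real.log y) + Real.log c := by
  rw [Real.log_rpow (one_pos.trans hy), Real.log_mul hc (Real.log_pos hy).ne', add_comm]

lemma isBigO_loglog_rpow_div_log_rpow {c : ℝ} (hc : c ≠ 0) :
    (fun y => Real.log (Real.log (y ^ c)) / Real.log (y ^ c)) =O[atTop]
      fun y => Real.log (Real.log y) / Real.log y := by
  have hnum : (fun y => Real.log (Real.log y) + Real.log c) =O[atTop]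
      fun y => Real.log (Real.log y) := (isBigO_refl _ _).add (isBigO_const_loglog _)
  have hprod := (hnum.const_mul_left c⁻¹).mul (isBigO_refl (fun y => (Real.log y)⁻¹) atTop)
  refine hprod.congr' ?_ (Eventually.of_forall fun y => (div_eq_mul_inv _ _).symm)
  filter_upwards [eventually_gt_atTop 1] with y hy
  rw [loglog_rpow hc hy, Real.log_rpow (one_pos.trans hy), div_eq_mul_inv, mul_inv]
  ring

lemma isBigO_loglog_sqrt_div_log_sqrt :
    (fun y => Real.log (Real.log √y) / Real.log √y) =O[atTop]
      fun y => Real.log (Real.log y) / Real.log y := by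
  simpa only [Real.sqrt_eq_rpow] using isBigO_loglog_rpow_div_log_rpow one_half_pos.ne'

end LogLog

namespace MertensWeight

variable {ι : Type*} {ν f : ι → ℝ} {C D s : ℝ} (W : MertensWeight ν f C)
include W

lemma isBigO_partialSum_loglog : partialSum ν f =O[atTop] fun y => Real.log (Real.log y) := by
  have hbounded : (fun y => partialSum ν f y - Real.log (Real.log y) -
      (partialSum ν f 2 - Real.log (Real.log 2))) =O[atTop] fun y => Real.log (Real.log y) := by
    refine (IsBigO.of_norm_eventuallyLE ?_).trans (isBigO_const_loglog (2 * C / Real.log 2))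
    filter_upwards [eventually_ge_atTop 2] with y hy
    exact W.abs_partialSum_sub_loglog_sub_le le_rfl hy
  exact ((hbounded.add (isBigO_const_loglog _)).add (isBigO_refl _ _)).congr_left fun y => by
    rw [sub_add_cancel, sub_add_cancel]

lemma isBigO_partialSum_sub_loglog_sub
    (hD : Tendsto (fun t => partialSum ν f t - Real.log (Real.log t)) atTop (𝓝 D)) :
    (fun t => partialSum ν f t - Real.log (Real.log t) - D) =O[atTop] fun t => (Real.log t)⁻¹ := by
  refine IsBigO.trans (IsBigO.of_norm_eventuallyLE ?_) (isBigO_const_mul_self (2 * C) _ _)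
  filter_upwards [eventually_ge_atTop 2] with t ht
  exact W.abs_partialSum_sub_loglog_sub_le_of_tendsto hD ht

lemma log_div_two_mul_log_le (hs : 1 < s) {i : ι} (hi : ν i ≤ s) :
    Real.log (ν i) / (2 * Real.log s) ≤ 1 / 2 := by
  have hlog : 0 < Real.log s := Real.log_pos hs
  rw [div_le_div_iff₀ (by positivity) two_pos]
  linarith [Real.log_le_log (one_pos.trans_le (W.one_le i)) hi]

lemma abs_mul_partialSum_div_sub_le (hs : 2 ≤ s) {i : ι} (hi : ν i ≤ s)
    (hD : Tendsto (fun t => partialSum ν f t - Real.log (Real.log t)) atTop (𝓝 D)) :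
    |partialSum ν f (s * s / ν i) - (Real.log (Real.log s) + Real.log 2 + D +
      Real.log (1 - Real.log (ν i) / (2 * Real.log s)))| ≤ 2 * C / Real.log s := by
  have hs0 : 0 < s := two_pos.trans_le hs
  have hi0 : 0 < ν i := one_pos.trans_le (W.one_le i)
  have hlog : 0 < Real.log s := Real.log_pos (one_lt_two.trans_le hs)
  have hle : s ≤ s * s / ν i := (le_div_iff₀ hi0).2 (mul_le_mul_of_nonneg_left hi hs0.le)
  have hfactor : 1 - Real.log (ν i) / (2 * Real.log s) ≠ 0 := by
    have := W.log_div_two_mul_log_le (one_lt_two.trans_le hs) hi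
    linarith
  have hloglog : Real.log (Real.log (s * s / ν i)) = Real.log (Real.log s) + Real.log 2 +
      Real.log (1 - Real.log (ν i) / (2 * Real.log s)) := by
    rw [← Real.log_mul hlog.ne' two_ne_zero, ← Real.log_mul (by positivity) hfactor,
      Real.log_div (by positivity) hi0.ne', Real.log_mul hs0.ne' hs0.ne']
    congr 1
    field_simp
    ring
  calc _ = |partialSum ν f (s * s / ν i) - Real.log (Real.log (s * s / ν i)) - D| := by
        rw [hloglog]
        congr 1
        ring
    _ ≤ 2 * C / Real.log (s * s / ν i) :=
        W.abs_partialSum_sub_loglog_sub_le_of_tendsto hD (hs.trans hle)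
    _ ≤ 2 * C / Real.log s := by
        have := W.constant_nonneg
        gcongr

lemma abs_sum_mul_partialSum_div_sub_le (hs : 2 ≤ s)
    (hD : Tendsto (fun t => partialSum ν f t - Real.log (Real.log t)) atTop (𝓝 D)) :
    |∑ i ∈ sublevel ν s, f i * partialSum ν f (s * s / ν i) -
      ((Real.log (Real.log s) + Real.log 2 + D) * partialSum ν f s +
        partialSum ν (fun i => f i * Real.log (1 - Real.log (ν i) / (2 * Real.log s))) s)| ≤
      2 * C / Real.log s * partialSum ν f s := by
  simp only [partialSum.eq_1 ν _ s, Finset.mul_sum, ← Finset.sum_add_distrib,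
    ← Finset.sum_sub_distrib]
  refine (Finset.abs_sum_le_sum_abs _ _).trans (Finset.sum_le_sum fun i hi => ?_)
  have hle := W.abs_mul_partialSum_div_sub_le hs (W.finiteSublevels.mem_sublevel.1 hi) hD
  calc _ = |partialSum ν f (s * s / ν i) - (Real.log (Real.log s) + Real.log 2 + D +
        Real.log (1 - Real.log (ν i) / (2 * Real.log s)))| * f i := by
        rw [← abs_of_nonneg (W.nonneg i), ← abs_mul, abs_of_nonneg (W.nonneg i)]
        congr 1
        ring
    _ ≤ 2 * C / Real.log s * f i := mul_le_mul_of_nonneg_right hle (W.nonneg i)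

lemma abs_partialSum_log_series_term_sub_le (hs : 1 < s) (k : ℕ) :
    |partialSum ν (fun i => f i *
        ((Real.log (ν i) / (2 * Real.log s)) ^ (k + 1) / ((k : ℝ) + 1))) s -
      (1 / 2) ^ (k + 1) / ((k : ℝ) + 1) ^ 2| ≤ C / Real.log s * (1 / 2) ^ k := by
  have hlog : 0 < Real.log s := Real.log_pos hs
  have hC := W.constant_nonneg
  have hrescale : partialSum ν (fun i => f i *
        ((Real.log (ν i) / (2 * Real.log s)) ^ (k + 1) / ((k : ℝ) + 1))) s -
      (1 / 2) ^ (k + 1) / ((k : ℝ) + 1) ^ 2 =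
      (partialSum ν (fun i => f i * Real.log (ν i) ^ (k + 1)) s -
        Real.log s ^ (k + 1) / (k + 1)) / ((2 * Real.log s) ^ (k + 1) * (k + 1)) := by
    rw [sub_div, partialSum, partialSum, Finset.sum_div]
    congr 1
    · refine Finset.sum_congr rfl fun i _ => ?_
      rw [div_pow]
      field_simp
    · rw [mul_pow, div_pow, one_pow]
      field_simp
  rw [hrescale, abs_div,
    abs_of_pos (by positivity : 0 < (2 * Real.log s) ^ (k + 1) * ((k : ℝ) + 1))]
  calc _ ≤ 2 * C * Real.log s ^ k / ((2 * Real.log s) ^ (k + 1) * ((k : ℝ) + 1)) := by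
        gcongr
        exact W.abs_partialSum_log_pow_sub_le k hs.le
    _ ≤ 2 * C * Real.log s ^ k / ((2 * Real.log s) ^ (k + 1) * 1) := by
        gcongr
        linarith [Nat.cast_nonneg (α := ℝ) k]
    _ = C / Real.log s * (1 / 2) ^ k := by
        rw [mul_pow, div_pow, one_pow, pow_succ, pow_succ]
        field_simp

lemma abs_partialSum_log_add_dilogarithm_le (hs : 1 < s) :
    |partialSum ν (fun i => f i * Real.log (1 - Real.log (ν i) / (2 * Real.log s))) s +
      dilogarithm (1 / 2)| ≤ 2 * C / Real.log s := by
  have hlog : 0 < Real.log s := Real.log_pos hs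
  have hseries : HasSum (fun k : ℕ => partialSum ν (fun i => f i *
        ((Real.log (ν i) / (2 * Real.log s)) ^ (k + 1) / ((k : ℝ) + 1))) s)
      (partialSum ν (fun i => f i * -Real.log (1 - Real.log (ν i) / (2 * Real.log s))) s) := by
    refine hasSum_sum fun i hi => (Real.hasSum_pow_div_log_of_abs_lt_one ?_).mul_left (f i)
    have hhalf := W.log_div_two_mul_log_le hs (W.finiteSublevels.mem_sublevel.1 hi)
    rw [abs_of_pos (div_pos (W.log_pos i) (mul_pos two_pos hlog))]
    linarith
  have hdilog : HasSum (fun k : ℕ => (1 / 2 : ℝ) ^ (k + 1) / ((k : ℝ) + 1) ^ 2)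
      (dilogarithm (1 / 2)) := by
    refine (Summable.of_nonneg_of_le (fun k => by positivity) (fun k => ?_)
      summable_one_div_succ_sq).hasSum
    gcongr
    exact pow_le_one₀ (by norm_num) (by norm_num)
  have hle := (hseries.sub hdilog).norm_le_of_bounded
    (hasSum_geometric_two.mul_left (C / Real.log s))
    (W.abs_partialSum_log_series_term_sub_le hs)
  rw [Real.norm_eq_abs, ← abs_neg] at hle
  refine (le_of_eq ?_).trans (hle.trans_eq (by ring))
  simp only [partialSum, mul_neg, Finset.sum_neg_distrib]
  congr 1
  ring

lemma isBigO_pairSum_mul_self_sub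
    (hD : Tendsto (fun t => partialSum ν f t - Real.log (Real.log t)) atTop (𝓝 D)) :
    (fun s => pairSum ν f (s * s) -
      ((Real.log (Real.log s) + Real.log 2 + D) ^ 2 - Real.pi ^ 2 / 6)) =O[atTop]
      fun s => Real.log (Real.log s) / Real.log s := by
  set S := fun s => ∑ i ∈ sublevel ν s, f i * partialSum ν f (s * s / ν i)
  set Q := fun s => partialSum ν
    (fun i => f i * Real.log (1 - Real.log (ν i) / (2 * Real.log s))) s
  set e := fun s => partialSum ν f s - Real.log (Real.log s) - D with he_def
  have hS : (fun s => S s - ((Real.log (Real.log s) + Real.log 2 + D) * partialSum ν f s + Q s))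
      =O[atTop] fun s => Real.log (Real.log s) / Real.log s := by
    have hbound : (fun s => 2 * C * (Real.log s)⁻¹ * partialSum ν f s) =O[atTop]
        fun s => Real.log (Real.log s) / Real.log s :=
      ((isBigO_const_mul_self (2 * C) _ _).mul W.isBigO_partialSum_loglog).congr_right
        fun s => (div_eq_inv_mul _ _).symm
    refine (IsBigO.of_norm_eventuallyLE ?_).trans hbound
    filter_upwards [eventually_ge_atTop 2] with s hs
    exact W.abs_sum_mul_partialSum_div_sub_le hs hD
  have hQ : (fun s => Q s + dilogarithm (1 / 2)) =O[atTop] fun s => (Real.log s)⁻¹ := by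
    refine (IsBigO.of_norm_eventuallyLE ?_).trans (isBigO_const_mul_self (2 * C) _ _)
    filter_upwards [eventually_gt_atTop 1] with s hs
    exact W.abs_partialSum_log_add_dilogarithm_le hs
  have he : e =O[atTop] fun s => (Real.log s)⁻¹ := W.isBigO_partialSum_sub_loglog_sub hD
  have he_one : e =O[atTop] fun _ => (1 : ℝ) :=
    he.trans (isBigO_const_of_tendsto Real.tendsto_log_atTop.inv_tendsto_atTop one_ne_zero)
  have he_sq : (fun s => e s * e s) =O[atTop] fun s => (Real.log s)⁻¹ := by
    simpa only [mul_one] using he.mul he_one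
  have hsmall := (((hQ.const_mul_left 2).add (he.const_mul_left (2 * Real.log 2))).sub he_sq).trans
    isBigO_inv_log_loglog_div_log
  refine ((hS.const_mul_left 2).add hsmall).congr' ?_ EventuallyEq.rfl
  filter_upwards [eventually_ge_atTop 1] with s hs
  rw [W.finiteSublevels.pairSum_mul_self W.one_le hs, dilogarithm_half, he_def]
  ring

theorem isBigO_pairSum_sub
    (hD : Tendsto (fun t => partialSum ν f t - Real.log (Real.log t)) atTop (𝓝 D)) :
    (fun y => pairSum ν f y - ((Real.log (Real.log y) + D) ^ 2 - Real.pi ^ 2 / 6)) =O[atTop]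
      fun y => Real.log (Real.log y) / Real.log y := by
  refine (((W.isBigO_pairSum_mul_self_sub hD).comp_tendsto Real.tendsto_sqrt_atTop).trans
    isBigO_loglog_sqrt_div_log_sqrt).congr' ?_ EventuallyEq.rfl
  filter_upwards [eventually_gt_atTop 1] with y hy
  have hy0 : 0 ≤ y := zero_le_one.trans hy.le
  simp only [Function.comp_apply, Real.mul_self_sqrt hy0, Real.log_sqrt hy0,
    Real.log_div (Real.log_pos hy).ne' two_ne_zero, sub_add_cancel]

end MertensWeight

namespace UniformStar

variable {P : Type*} {N : P → ℕ} {κ τ K σ : ℝ} (H : UniformStar N κ τ K)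
include H

lemma exists_mertensWeight_inv :
    ∃ C, MertensWeight (primeNorm N) (fun p => (primeNorm N p)⁻¹) C := by
  obtain ⟨C, hC⟩ := H.exists_abs_partialSum_log_div_sub_log_le
  exact ⟨C, H.finiteSublevels_primeNorm, H.two_le_primeNorm,
    fun p => (inv_pos.2 (H.primeNorm_pos p)).le, hC⟩

lemma exists_pairSum_rpow_neg_mul_self_le (hσ0 : 0 ≤ σ) (hσ1 : σ < 1) :
    ∃ C, 0 ≤ C ∧ ∀ s, 1 < s → pairSum (primeNorm N) (fun p => primeNorm N p ^ (-σ)) (s * s) ≤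
      C * ((s * s) ^ (1 - σ) *
        (partialSum (primeNorm N) (fun p => (primeNorm N p)⁻¹) s / Real.log s)) := by
  obtain ⟨C, hC0, hC⟩ := H.exists_partialSum_primeNorm_rpow_neg_le hσ0 hσ1
  refine ⟨2 * C, by positivity, fun s hs => ?_⟩
  have hs0 : 0 < s := one_pos.trans hs
  have hlog : 0 < Real.log s := Real.log_pos hs
  have hterm : ∀ p ∈ sublevel (primeNorm N) s, primeNorm N p ^ (-σ) *
      partialSum (primeNorm N) (fun p => primeNorm N p ^ (-σ)) (s * s / primeNorm N p) ≤
      C * ((s * s) ^ (1 - σ) / Real.log s) * (primeNorm N p)⁻¹ := by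
    intro p hp
    have hp0 := H.primeNorm_pos p
    have hle : s ≤ s * s / primeNorm N p := (le_div_iff₀ hp0).2
      (mul_le_mul_of_nonneg_left (H.finiteSublevels_primeNorm.mem_sublevel.1 hp) hs0.le)
    calc _ ≤ primeNorm N p ^ (-σ) *
          (C * ((s * s / primeNorm N p) ^ (1 - σ) / Real.log (s * s / primeNorm N p))) := by
          gcongr
          exact hC _ (hs.trans_le hle)
      _ ≤ primeNorm N p ^ (-σ) * (C * ((s * s / primeNorm N p) ^ (1 - σ) / Real.log s)) := by
          gcongr
      _ = C * ((s * s) ^ (1 - σ) / Real.log s) *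
          (primeNorm N p ^ (-σ) * (primeNorm N p ^ (1 - σ))⁻¹) := by
          rw [Real.div_rpow (by positivity) hp0.le]
          field_simp
      _ = _ := by
          rw [← Real.rpow_neg hp0.le, ← Real.rpow_add hp0, ← Real.rpow_neg_one]
          congr 2
          ring
  have hsum := Finset.sum_le_sum hterm
  rw [← Finset.mul_sum] at hsum
  rw [H.finiteSublevels_primeNorm.pairSum_mul_self H.one_le_primeNorm hs.le]
  refine (sub_le_self _ (sq_nonneg _)).trans
    ((mul_le_mul_of_nonneg_left hsum two_pos.le).trans_eq ?_)
  rw [partialSum]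
  ring

theorem isBigO_pairSum_rpow_neg (hσ0 : 0 ≤ σ) (hσ1 : σ < 1) :
    pairSum (primeNorm N) (fun p => primeNorm N p ^ (-σ)) =O[atTop]
      fun y => y ^ (1 - σ) * (Real.log (Real.log y) / Real.log y) := by
  obtain ⟨C, -, hC⟩ := H.exists_pairSum_rpow_neg_mul_self_le hσ0 hσ1
  obtain ⟨C₁, W⟩ := H.exists_mertensWeight_inv
  set F := partialSum (primeNorm N) fun p => (primeNorm N p)⁻¹
  have hratio : (fun y => F √y / Real.log √y) =O[atTop]
      fun y => Real.log (Real.log y) / Real.log y := by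
    refine IsBigO.trans ?_ isBigO_loglog_sqrt_div_log_sqrt
    simp only [div_eq_mul_inv]
    exact (W.isBigO_partialSum_loglog.comp_tendsto Real.tendsto_sqrt_atTop).mul (isBigO_refl _ _)
  have hbound : (fun y => C * (y ^ (1 - σ) * (F √y / Real.log √y))) =O[atTop]
      fun y => y ^ (1 - σ) * (Real.log (Real.log y) / Real.log y) :=
    ((isBigO_refl _ _).mul hratio).const_mul_left C
  refine (IsBigO.of_norm_eventuallyLE ?_).trans hbound
  filter_upwards [eventually_gt_atTop 1] with y hy
  rw [Real.norm_of_nonneg (pairSum_nonneg (fun p => Real.rpow_nonneg (H.primeNorm_pos p).le _) y)]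
  simpa only [Real.mul_self_sqrt (zero_le_one.trans hy.le)] using
    hC √y (Real.lt_sqrt_of_sq_lt (by rwa [one_pow]))

end UniformStar

/-! ### Euler products over restricted exponents -/

section EulerProduct

variable {P : Type*}

lemma sum_finsupp_prod_eq_prod_sum {R : Type*} [CommSemiring R] (A : P → Finset ℕ) {g : P → ℕ → R}
    (hg : ∀ p, g p 0 = 1) (S : Finset P) :
    ∑ b ∈ S.finsupp A, b.prod g = ∏ p ∈ S, ∑ k ∈ A p, g p k := by
  rw [Finset.prod_sum, Finset.finsupp, Finset.sum_map]
  refine Finset.sum_congr rfl fun u _ => ?_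
  rw [Function.Embedding.coeFn_mk, Finsupp.prod_of_support_subset _
    (Finsupp.support_indicator_subset S u) g fun p _ => hg p, ← Finset.prod_attach]
  exact Finset.prod_congr rfl fun p _ => by rw [Finsupp.indicator_of_mem]

lemma mem_finsupp_iff_of_zero_mem {A : P → Finset ℕ} (hA : ∀ p, 0 ∈ A p) {S : Finset P}
    {b : P →₀ ℕ} : b ∈ S.finsupp A ↔ b.support ⊆ S ∧ ∀ p, b p ∈ A p := by
  rw [Finset.mem_finsupp_iff]
  refine and_congr_right fun hsupp => ⟨fun hb p => ?_, fun hb p _ => hb p⟩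
  by_cases hp : p ∈ S
  · exact hb p hp
  · rw [Finsupp.notMem_support_iff.1 fun hmem => hp (hsupp hmem)]
    exact hA p

theorem hasSum_prod_of_hasProd {A : P → Finset ℕ} {g : P → ℕ → ℝ} {a : ℝ} (hA : ∀ p, 0 ∈ A p)
    (hg0 : ∀ p, g p 0 = 1) (hg : ∀ p k, 0 ≤ g p k)
    (ha : HasProd (fun p => ∑ k ∈ A p, g p k) a) :
    HasSum (fun b : P →₀ ℕ => if ∀ p, b p ∈ A p then b.prod g else 0) a := by
  have hone (p : P) : 1 ≤ ∑ k ∈ A p, g p k :=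
    (hg0 p).symm.trans_le (Finset.single_le_sum (fun k _ => hg p k) (hA p))
  have hnonneg (b : P →₀ ℕ) : 0 ≤ if ∀ p, b p ∈ A p then b.prod g else 0 := by
    split_ifs
    exacts [Finset.prod_nonneg fun _ _ => hg _ _, le_rfl]
  have hfinite (S : Finset P) : ∑ b ∈ S.finsupp A, (if ∀ p, b p ∈ A p then b.prod g else 0) =
      ∏ p ∈ S, ∑ k ∈ A p, g p k := by
    rw [← sum_finsupp_prod_eq_prod_sum A hg0]
    exact Finset.sum_congr rfl fun b hb => if_pos ((mem_finsupp_iff_of_zero_mem hA).1 hb).2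
  have hle (S : Finset P) : ∏ p ∈ S, ∑ k ∈ A p, g p k ≤ a := by
    refine ge_of_tendsto ha ?_
    filter_upwards [eventually_ge_atTop S] with T hT
    exact Finset.prod_le_prod_of_subset_of_one_le hT (fun p _ => zero_le_one.trans (hone p))
      fun p _ _ => hone p
  refine hasSum_of_isLUB_of_nonneg _ hnonneg ⟨?_, fun u hu => ?_⟩
  · rintro _ ⟨T, rfl⟩
    refine le_trans ?_ (hle (T.biUnion fun b => b.support))
    rw [← sum_finsupp_prod_eq_prod_sum A hg0]
    refine (Finset.sum_filter _ _).symm.trans_le (Finset.sum_le_sum_of_subset_of_nonneg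
      (fun b hb => ?_) fun b _ _ => Finset.prod_nonneg fun _ _ => hg _ _)
    obtain ⟨hbT, hbA⟩ := Finset.mem_filter.1 hb
    exact (mem_finsupp_iff_of_zero_mem hA).2
      ⟨Finset.subset_biUnion_of_mem (fun b : P →₀ ℕ => b.support) hbT, hbA⟩
  · refine le_of_tendsto' ha fun S => ?_
    rw [← hfinite]
    exact hu ⟨_, rfl⟩

end EulerProduct

section ResidualExponents

variable {P : Type*} {h : ℕ} {D : Finset P} {p : P} {t : ℝ}

/-- The exponents left at `p` once the largest possible `h`-th power has been removed from an
`h`-full element divisible by every prime in `D`, where one factor `p ^ h` is set aside for each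
`p ∈ D`. -/
def residualExponents (h : ℕ) (D : Finset P) (p : P) : Finset ℕ :=
  if p ∈ D then Finset.range h else insert 0 (Finset.Ioo h (2 * h))

/-- The Euler factor of the residual exponents at a prime outside `D`. -/
def freeFactor (h : ℕ) (t : ℝ) : ℝ := 1 + ∑ k ∈ Finset.Ioo h (2 * h), t ^ k

/-- The Euler factor of the residual exponents at a prime in `D`. -/
def markedFactor (h : ℕ) (t : ℝ) : ℝ := ∑ k ∈ Finset.range h, t ^ k

lemma zero_mem_residualExponents (hh : h ≠ 0) : 0 ∈ residualExponents h D p := by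
  rw [residualExponents]
  split_ifs
  exacts [Finset.mem_range.2 (Nat.pos_of_ne_zero hh), Finset.mem_insert_self _ _]

lemma one_le_freeFactor (ht : 0 ≤ t) : 1 ≤ freeFactor h t :=
  le_add_of_nonneg_right (Finset.sum_nonneg fun k _ => pow_nonneg ht k)

lemma markedFactor_nonneg (ht : 0 ≤ t) : 0 ≤ markedFactor h t :=
  Finset.sum_nonneg fun k _ => pow_nonneg ht k

lemma markedFactor_div_freeFactor_nonneg (ht : 0 ≤ t) : 0 ≤ markedFactor h t / freeFactor h t :=
  div_nonneg (markedFactor_nonneg ht) (zero_le_one.trans (one_le_freeFactor ht))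

lemma markedFactor_div_freeFactor_le (ht0 : 0 ≤ t) (ht1 : t ≤ 1) :
    markedFactor h t / freeFactor h t ≤ h := by
  have hmarked : markedFactor h t ≤ h := by
    simpa [markedFactor] using Finset.sum_le_card_nsmul _ _ 1 fun k (_ : k ∈ Finset.range h) =>
      pow_le_one₀ ht0 ht1
  exact (div_le_self (markedFactor_nonneg ht0) (one_le_freeFactor ht0)).trans hmarked

lemma sum_residualExponents_pow (ht : 0 ≤ t) : ∑ k ∈ residualExponents h D p, t ^ k =
    freeFactor h t * if p ∈ D then markedFactor h t / freeFactor h t else 1 := by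
  have hfree : freeFactor h t ≠ 0 := (one_pos.trans_le (one_le_freeFactor ht)).ne'
  rw [residualExponents]
  split_ifs
  · rw [mul_div_cancel₀ _ hfree, markedFactor]
  · rw [Finset.sum_insert (by simp), mul_one, pow_zero, freeFactor]

lemma elemNorm_rpow_neg (N : P → ℕ) (b : P →₀ ℕ) (σ : ℝ) :
    elemNorm N b ^ (-σ) = b.prod fun p k => (primeNorm N p ^ (-σ)) ^ k := by
  have hnonneg (p : P) : 0 ≤ primeNorm N p := Nat.cast_nonneg _
  rw [elemNorm_eq_prod, Finsupp.prod,
    ← Real.finsetProd_rpow _ _ fun p _ => pow_nonneg (hnonneg p) _]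
  exact Finset.prod_congr rfl fun p _ => Real.rpow_pow_comm (hnonneg p) _ _ |>.symm

namespace UniformStar

variable {N : P → ℕ} {κ τ K σ : ℝ} (H : UniformStar N κ τ K)
include H

lemma multipliable_freeFactor (hσ0 : 0 < σ) (hσ : 1 < σ * (h + 1)) :
    Multipliable fun p => freeFactor h (primeNorm N p ^ (-σ)) := by
  have ht (p : P) : 0 ≤ primeNorm N p ^ (-σ) := Real.rpow_nonneg (H.primeNorm_pos p).le _
  refine Real.multipliable_one_add_of_summable (Summable.of_nonneg_of_le
    (fun p => Finset.sum_nonneg fun k _ => pow_nonneg (ht p) k) (fun p => ?_)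
    ((H.summable_primeNorm_rpow_neg hσ).mul_left (h : ℝ)))
  have hpow : ∀ k ∈ Finset.Ioo h (2 * h),
      (primeNorm N p ^ (-σ)) ^ k ≤ primeNorm N p ^ (-(σ * (h + 1))) := by
    intro k hk
    rw [← Real.rpow_mul_natCast (H.primeNorm_pos p).le, neg_mul]
    have : (h : ℝ) + 1 ≤ k := by exact_mod_cast (Finset.mem_Ioo.1 hk).1
    gcongr
    exact H.one_le_primeNorm p
  refine (Finset.sum_le_card_nsmul _ _ _ hpow).trans ?_
  rw [nsmul_eq_mul, Nat.card_Ioo]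
  gcongr
  · exact Real.rpow_nonneg (H.primeNorm_pos p).le _
  · omega

theorem hasSum_residual_rpow_neg (hh : h ≠ 0) (D : Finset P) (hσ0 : 0 < σ)
    (hσ : 1 < σ * (h + 1)) :
    HasSum (fun b : P →₀ ℕ =>
        if ∀ p, b p ∈ residualExponents h D p then elemNorm N b ^ (-σ) else 0)
      ((∏' p, freeFactor h (primeNorm N p ^ (-σ))) *
        ∏ p ∈ D, (markedFactor h (primeNorm N p ^ (-σ)) /
          freeFactor h (primeNorm N p ^ (-σ)))) := by
  have ht (p : P) : 0 ≤ primeNorm N p ^ (-σ) := Real.rpow_nonneg (H.primeNorm_pos p).le _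
  simp only [elemNorm_rpow_neg]
  refine hasSum_prod_of_hasProd (fun p => zero_mem_residualExponents hh) (fun p => pow_zero _)
    (fun p k => pow_nonneg (ht p) k) ?_
  simp only [sum_residualExponents_pow (ht _)]
  refine (H.multipliable_freeFactor hσ0 hσ).hasProd.mul ?_
  rw [Finset.prod_congr rfl fun p hp => (if_pos hp).symm]
  exact hasProd_prod_of_ne_finset_one fun p hp => if_neg hp

end UniformStar

end ResidualExponents

/-! ### Counting `h`-full elements divisible by given primes -/

section FullCount

variable {P : Type*} {N : P → ℕ} {h : ℕ} {D : Finset P} {a b m : P →₀ ℕ} {p : P} {y : ℝ}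

/-- The number of `h`-full elements of norm at most `x` divisible by every prime in `D`. -/
def fullCount (h : ℕ) (N : P → ℕ) (D : Finset P) : ℝ → ℝ :=
  partialSum (elemNorm N) fun m => if HFull h m ∧ D ⊆ m.support then 1 else 0

/-- The `h`-full element with residual part `b` and remaining `h`-th power `a ^ h`, each prime in
`D` contributing the `h`-th power set aside for it. -/
def assemble (h : ℕ) (D : Finset P) (b a : P →₀ ℕ) : P →₀ ℕ := h • a + b + h • primeProduct D

lemma assemble_apply : assemble h D b a p = h * a p + b p + if p ∈ D then h else 0 := by
  simp [assemble, primeProduct_apply]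

lemma mem_residualExponents_of_mem {k : ℕ} (hp : p ∈ D) : k ∈ residualExponents h D p ↔ k < h := by
  rw [residualExponents, if_pos hp, Finset.mem_range]

lemma mem_residualExponents_of_notMem {k : ℕ} (hp : p ∉ D) :
    k ∈ residualExponents h D p ↔ k = 0 ∨ h < k ∧ k < 2 * h := by
  rw [residualExponents, if_neg hp, Finset.mem_insert, Finset.mem_Ioo]

lemma injOn_mod_residualExponents : Set.InjOn (· % h) (residualExponents h D p : Set ℕ) := by
  intro k hk l hl hkl
  have hmod {k : ℕ} (hk : h < k ∧ k < 2 * h) : k % h = k - h := by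
    rw [Nat.mod_eq_sub_mod hk.1.le, Nat.mod_eq_of_lt (by omega)]
  simp only [Finset.mem_coe] at hk hl hkl
  by_cases hp : p ∈ D
  · rw [mem_residualExponents_of_mem hp] at hk hl
    rwa [Nat.mod_eq_of_lt hk, Nat.mod_eq_of_lt hl] at hkl
  · rw [mem_residualExponents_of_notMem hp] at hk hl
    rcases hk with rfl | hk <;> rcases hl with rfl | hl
    · rfl
    · rw [Nat.zero_mod, hmod hl] at hkl
      omega
    · rw [Nat.zero_mod, hmod hk] at hkl
      omega
    · rw [hmod hk, hmod hl] at hkl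
      omega

lemma assemble_injective {a' b' : P →₀ ℕ} (hh : h ≠ 0) (hb : ∀ p, b p ∈ residualExponents h D p)
    (hb' : ∀ p, b' p ∈ residualExponents h D p) (heq : assemble h D b a = assemble h D b' a') :
    b = b' ∧ a = a' := by
  have heq_apply (p : P) : h * a p + b p = h * a' p + b' p := by
    have := DFunLike.congr_fun heq p
    rw [assemble_apply, assemble_apply] at this
    exact Nat.add_right_cancel this
  have hbb' : b = b' := by
    ext p
    refine injOn_mod_residualExponents (hb p) (hb' p) ?_
    simpa only [Nat.mul_add_mod] using congrArg (· % h) (heq_apply p)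
  subst hbb'
  exact ⟨rfl, Finsupp.ext fun p => Nat.eq_of_mul_eq_mul_left (Nat.pos_of_ne_zero hh)
    (Nat.add_right_cancel (heq_apply p))⟩

lemma exists_mul_add_residual_eq {k : ℕ} (hh : h ≠ 0) (hk : k = 0 ∨ h ≤ k) (hD : p ∈ D → k ≠ 0) :
    ∃ j, ∃ i ∈ residualExponents h D p, h * j + i + (if p ∈ D then h else 0) = k := by
  have hmod : k % h < h := Nat.mod_lt _ (Nat.pos_of_ne_zero hh)
  have hdiv (hk0 : k ≠ 0) : h * (k / h - 1) + h + k % h = k := by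
    have hone : 1 ≤ k / h :=
      (Nat.one_le_div_iff (Nat.pos_of_ne_zero hh)).2 (hk.resolve_left hk0)
    rw [← Nat.mul_succ, Nat.succ_eq_add_one, Nat.sub_add_cancel hone, Nat.div_add_mod]
  by_cases hp : p ∈ D
  · refine ⟨k / h - 1, k % h, (mem_residualExponents_of_mem hp).2 hmod, ?_⟩
    rw [if_pos hp, add_right_comm, hdiv (hD hp)]
  · simp only [mem_residualExponents_of_notMem hp, if_neg hp, add_zero]
    by_cases hr : k % h = 0
    · refine ⟨k / h, 0, Or.inl rfl, ?_⟩
      rw [add_zero, Nat.mul_div_cancel' (Nat.dvd_of_mod_eq_zero hr)]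
    · refine ⟨k / h - 1, h + k % h, Or.inr ⟨by omega, by omega⟩, ?_⟩
      rw [← add_assoc, hdiv fun hk0 => hr (by rw [hk0, Nat.zero_mod])]

lemma exists_assemble_eq (hh : h ≠ 0) (hm : HFull h m) (hD : D ⊆ m.support) :
    ∃ b a, (∀ p, b p ∈ residualExponents h D p) ∧ assemble h D b a = m := by
  choose j i hi hji using fun p =>
    exists_mul_add_residual_eq (D := D) hh (hm p) fun hp => Finsupp.mem_support_iff.1 (hD hp)
  have hmem {n : P → ℕ} (hn : ∀ p, m p = 0 → n p = 0) (p : P) (hnp : n p ≠ 0) : p ∈ m.support :=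
    Finsupp.mem_support_iff.2 fun hmp => hnp (hn p hmp)
  have hzero (p : P) (hmp : m p = 0) : h * j p = 0 ∧ i p = 0 := by
    have := hji p
    omega
  refine ⟨Finsupp.onFinset m.support i (hmem fun p hmp => (hzero p hmp).2),
    Finsupp.onFinset m.support j
      (hmem fun p hmp => (mul_eq_zero.1 (hzero p hmp).1).resolve_left hh), hi, ?_⟩
  ext p
  rw [assemble_apply]
  exact hji p

lemma support_subset_assemble (hh : h ≠ 0) : D ⊆ (assemble h D b a).support := by
  intro p hp
  rw [Finsupp.mem_support_iff, assemble_apply, if_pos hp]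
  omega

lemma hFull_assemble (hb : ∀ p, b p ∈ residualExponents h D p) : HFull h (assemble h D b a) := by
  intro p
  have hbp := hb p
  rw [assemble_apply]
  by_cases hp : p ∈ D
  · rw [if_pos hp]
    exact Or.inr (Nat.le_add_left _ _)
  · rw [mem_residualExponents_of_notMem hp] at hbp
    rw [if_neg hp, add_zero]
    rcases hbp with hbp | hbp
    · rcases Nat.eq_zero_or_pos (a p) with ha | ha
      · exact Or.inl (by rw [ha, hbp, mul_zero])
      · exact Or.inr ((Nat.le_mul_of_pos_right h ha).trans (Nat.le_add_right _ _))
    · exact Or.inr (hbp.1.le.trans (Nat.le_add_left _ _))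

namespace IsDiscreteNorm

variable (hN : IsDiscreteNorm N)
include hN

lemma elemNorm_assemble_le_iff (hh : h ≠ 0) (hy : 0 < y) :
    elemNorm N (assemble h D b a) ≤ y ^ h ↔
      elemNorm N a ≤ y / elemNorm N (primeProduct D) * elemNorm N b ^ (-(1 / (h : ℝ))) := by
  have ha := hN.elemNorm_pos a
  have hb := hN.elemNorm_pos b
  have hD := hN.elemNorm_pos (primeProduct D)
  have hroot : (elemNorm N b ^ (1 / (h : ℝ))) ^ h = elemNorm N b := by
    rw [one_div, Real.rpow_inv_natCast_pow hb.le hh]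
  have hprod : elemNorm N (assemble h D b a) =
      (elemNorm N a * elemNorm N b ^ (1 / (h : ℝ)) * elemNorm N (primeProduct D)) ^ h := by
    rw [assemble, elemNorm_add, elemNorm_add, elemNorm_nsmul, elemNorm_nsmul, mul_pow, mul_pow,
      hroot]
  rw [hprod, pow_le_pow_iff_left₀ (by positivity) hy.le hh, Real.rpow_neg hb.le,
    ← div_eq_mul_inv, le_div_iff₀ (by positivity), le_div_iff₀ hD]

lemma elemNorm_le_assemble : elemNorm N b ≤ elemNorm N (assemble h D b a) :=
  hN.elemNorm_mono (le_add_of_le_left le_add_self)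

lemma fullCount_pow_eq_sum (hh : h ≠ 0) (D : Finset P) (hy : 0 < y) :
    fullCount h N D (y ^ h) =
      ∑ b ∈ sublevel (elemNorm N) (y ^ h) with (∀ p, b p ∈ residualExponents h D p),
        elementCount N
          (y / elemNorm N (primeProduct D) * elemNorm N b ^ (-(1 / (h : ℝ)))) := by
  simp only [fullCount, elementCount, partialSum]
  rw [← Finset.sum_filter, Finset.sum_sigma']
  symm
  refine Finset.sum_nbij (fun i => assemble h D i.1 i.2) ?_ ?_ ?_ fun _ _ => rfl
  · rintro ⟨b, a⟩ hba
    simp only [Finset.mem_sigma, Finset.mem_filter, hN.finiteSublevels.mem_sublevel] at hba ⊢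
    exact ⟨(hN.elemNorm_assemble_le_iff hh hy).2 hba.2, hFull_assemble hba.1.2,
      support_subset_assemble hh⟩
  · rintro ⟨b, a⟩ hba ⟨b', a'⟩ hba' heq
    simp only [Finset.mem_coe, Finset.mem_sigma, Finset.mem_filter] at hba hba'
    obtain ⟨rfl, rfl⟩ := assemble_injective hh hba.1.2 hba'.1.2 heq
    rfl
  · intro m hm
    simp only [Finset.mem_coe, Finset.mem_filter, hN.finiteSublevels.mem_sublevel] at hm
    obtain ⟨b, a, hb, rfl⟩ := exists_assemble_eq hh hm.2.1 hm.2.2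
    refine ⟨⟨b, a⟩, ?_, rfl⟩
    simp only [Finset.mem_coe, Finset.mem_sigma, Finset.mem_filter,
      hN.finiteSublevels.mem_sublevel]
    exact ⟨⟨hN.elemNorm_le_assemble.trans hm.1, hb⟩,
      (hN.elemNorm_assemble_le_iff hh hy).1 hm.1⟩

lemma hasSum_fullCount_pow (hh : h ≠ 0) (D : Finset P) (hy : 0 < y) :
    HasSum (fun b : P →₀ ℕ => if ∀ p, b p ∈ residualExponents h D p then
      elementCount N (y / elemNorm N (primeProduct D) * elemNorm N b ^ (-(1 / (h : ℝ)))) else 0)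
      (fullCount h N D (y ^ h)) := by
  rw [hN.fullCount_pow_eq_sum hh D hy, Finset.sum_filter]
  refine hasSum_sum_of_ne_finset_zero fun b hb => ?_
  split_ifs
  · refine Finset.sum_eq_zero fun a ha => absurd ?_ hb
    rw [hN.finiteSublevels.mem_sublevel, ← hN.elemNorm_assemble_le_iff hh hy] at ha
    exact hN.finiteSublevels.mem_sublevel.2 (hN.elemNorm_le_assemble.trans ha)
  · rfl

lemma elemNorm_primeProduct_le_of_hFull (hy : 0 ≤ y) (hh : h ≠ 0) (hm : HFull h m)
    (hD : D ⊆ m.support) (hmy : elemNorm N m ≤ y ^ h) : elemNorm N (primeProduct D) ≤ y := by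
  refine (pow_le_pow_iff_left₀ (hN.elemNorm_pos _).le hy hh).1 (le_trans ?_ hmy)
  rw [← elemNorm_nsmul]
  obtain ⟨b, a, -, rfl⟩ := exists_assemble_eq hh hm hD
  exact hN.elemNorm_mono le_add_self

lemma fullCount_pow_eq_zero (hy : 0 ≤ y) (hh : h ≠ 0) (hD : y < elemNorm N (primeProduct D)) :
    fullCount h N D (y ^ h) = 0 :=
  Finset.sum_eq_zero fun _ hm => if_neg fun hfull => hD.not_ge
    (hN.elemNorm_primeProduct_le_of_hFull hy hh hfull.1 hfull.2
      (hN.finiteSublevels.mem_sublevel.1 hm))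

end IsDiscreteNorm

theorem UniformStar.abs_fullCount_pow_sub_le {κ τ K : ℝ} (H : UniformStar N κ τ K) (hh : h ≠ 0)
    (hτ : h < τ * (h + 1)) (D : Finset P) (hy : 0 < y) :
    |fullCount h N D (y ^ h) - κ * (y / elemNorm N (primeProduct D)) *
      ((∏' p, freeFactor h (primeNorm N p ^ (-(1 / (h : ℝ))))) *
        ∏ p ∈ D, (markedFactor h (primeNorm N p ^ (-(1 / (h : ℝ)))) /
          freeFactor h (primeNorm N p ^ (-(1 / (h : ℝ))))))| ≤
    K * (y / elemNorm N (primeProduct D)) ^ τ *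
      ((∏' p, freeFactor h (primeNorm N p ^ (-(τ / (h : ℝ))))) *
        ∏ p ∈ D, (markedFactor h (primeNorm N p ^ (-(τ / (h : ℝ)))) /
          freeFactor h (primeNorm N p ^ (-(τ / (h : ℝ)))))) := by
  have hh0 : (0 : ℝ) < h := Nat.cast_pos.2 (Nat.pos_of_ne_zero hh)
  have hD := H.elemNorm_pos (primeProduct D)
  have hmain := (H.hasSum_residual_rpow_neg hh D (σ := 1 / h) (by positivity)
    (by rw [one_div_mul_eq_div, one_lt_div hh0]; exact lt_add_one _)).mul_left
      (κ * (y / elemNorm N (primeProduct D)))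
  have herror := (H.hasSum_residual_rpow_neg hh D (σ := τ / h) (div_pos H.exponent_pos hh0)
    (by rwa [div_mul_eq_mul_div, one_lt_div hh0])).mul_left
      (K * (y / elemNorm N (primeProduct D)) ^ τ)
  refine ((H.hasSum_fullCount_pow hh D hy).sub hmain).norm_le_of_bounded herror fun b => ?_
  split_ifs
  · have hb := H.elemNorm_pos b
    have hpos : 0 < y / elemNorm N (primeProduct D) * elemNorm N b ^ (-(1 / (h : ℝ))) := by
      positivity
    rw [mul_assoc κ, Real.norm_eq_abs]
    refine (H.abs_elementCount_sub_le _ hpos).trans_eq ?_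
    rw [Real.mul_rpow (by positivity) (by positivity), ← Real.rpow_mul hb.le]
    ring_nf
  · simp

end FullCount

/-! ### Local densities -/

section LocalDensity

variable {h : ℕ} {t q : ℝ}

lemma markedFactor_mul (hh : h ≠ 0) : markedFactor h t * (1 - t + t ^ h) = freeFactor h t := by
  have hgeom : markedFactor h t * (1 - t) = 1 - t ^ h := by
    rw [mul_comm, markedFactor, mul_neg_geom_sum]
  have hshift : ∑ k ∈ Finset.Ioo h (2 * h), t ^ k = t ^ h * markedFactor h t - t ^ h := by
    have hlt : h < 2 * h := by omega
    rw [eq_sub_iff_add_eq', ← Finset.sum_insert Finset.left_notMem_Ioo,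
      Finset.Ioo_insert_left hlt, Finset.sum_Ico_eq_sum_range, two_mul, Nat.add_sub_cancel,
      markedFactor, Finset.mul_sum]
    simp only [pow_add]
  rw [freeFactor, hshift, mul_add, hgeom]
  ring

lemma markedFactor_div_freeFactor (hh : h ≠ 0) (ht : 0 ≤ t) :
    markedFactor h t / freeFactor h t = (1 - t + t ^ h)⁻¹ := by
  have hne : markedFactor h t * (1 - t + t ^ h) ≠ 0 := by
    rw [markedFactor_mul hh]
    exact (zero_lt_one.trans_le (one_le_freeFactor ht)).ne'
  rw [← markedFactor_mul hh, div_mul_cancel_left₀ (left_ne_zero_of_mul hne)]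

lemma freeFactor_eq (hh : h ≠ 0) (ht : t ≠ 1) :
    freeFactor h t = 1 + t ^ h * (t - t ^ h) / (1 - t) := by
  have hsub : 1 - t ≠ 0 := sub_ne_zero.2 ht.symm
  have hgeom : markedFactor h t = (1 - t ^ h) / (1 - t) := by
    rw [eq_div_iff hsub, mul_comm, markedFactor, mul_neg_geom_sum]
  rw [← markedFactor_mul hh, hgeom]
  field_simp
  ring

lemma rpow_neg_one_div_pow (hh : h ≠ 0) (hq : 0 ≤ q) : (q ^ (-(1 / (h : ℝ)))) ^ h = q⁻¹ := by
  rw [Real.rpow_neg hq, inv_pow, one_div, Real.rpow_inv_natCast_pow hq hh]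

/-- The asymptotic proportion, among `h`-full elements, of those divisible by a given prime of
norm `q`. -/
def fullDensity (h : ℕ) (q : ℝ) : ℝ := 1 / (q - q ^ (1 - 1 / (h : ℝ)) + 1)

lemma inv_mul_markedFactor_div_freeFactor (hh : h ≠ 0) (hq : 0 < q) :
    q⁻¹ * (markedFactor h (q ^ (-(1 / (h : ℝ)))) / freeFactor h (q ^ (-(1 / (h : ℝ))))) =
      fullDensity h q := by
  rw [markedFactor_div_freeFactor hh (by positivity), rpow_neg_one_div_pow hh hq.le, fullDensity,
    sub_eq_add_neg 1 (1 / (h : ℝ)), Real.rpow_add hq, Real.rpow_one, ← mul_inv, ← one_div, mul_add,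
    mul_sub, mul_one, mul_inv_cancel₀ hq.ne']

lemma fullDensity_nonneg (hh : h ≠ 0) (hq : 0 < q) : 0 ≤ fullDensity h q := by
  rw [← inv_mul_markedFactor_div_freeFactor hh hq]
  exact mul_nonneg (inv_nonneg.2 hq.le) (markedFactor_div_freeFactor_nonneg (by positivity))

lemma rpow_neg_one_div_le_one (hq : 1 ≤ q) : q ^ (-(1 / (h : ℝ))) ≤ 1 :=
  Real.rpow_le_one_of_one_le_of_nonpos hq (neg_nonpos.2 (by positivity))

lemma fullDensity_le (hh : h ≠ 0) (hq : 1 ≤ q) : fullDensity h q ≤ h * q⁻¹ := by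
  rw [← inv_mul_markedFactor_div_freeFactor hh (by positivity), mul_comm]
  gcongr
  exact markedFactor_div_freeFactor_le (by positivity) (rpow_neg_one_div_le_one hq)

lemma fullDensity_sub_inv (hh : h ≠ 0) (hq : 0 < q) :
    fullDensity h q - q⁻¹ = (q ^ (-(1 / (h : ℝ))) - q⁻¹) * fullDensity h q := by
  have ht : 0 ≤ q ^ (-(1 / (h : ℝ))) := by positivity
  have hne : 1 - q ^ (-(1 / (h : ℝ))) + q⁻¹ ≠ 0 := by
    rw [← rpow_neg_one_div_pow hh hq.le]
    refine right_ne_zero_of_mul (a := markedFactor h (q ^ (-(1 / (h : ℝ))))) ?_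
    rw [markedFactor_mul hh]
    exact (zero_lt_one.trans_le (one_le_freeFactor ht)).ne'
  rw [← inv_mul_markedFactor_div_freeFactor hh hq, markedFactor_div_freeFactor hh ht,
    rpow_neg_one_div_pow hh hq.le]
  generalize q ^ (-(1 / (h : ℝ))) = t at hne
  rw [← sub_eq_zero]
  calc _ = q⁻¹ * ((1 - t + q⁻¹) * (1 - t + q⁻¹)⁻¹ - 1) := by ring
    _ = 0 := by rw [mul_inv_cancel₀ hne, sub_self, mul_zero]

lemma inv_le_rpow_neg_one_div (hq : 1 ≤ q) : q⁻¹ ≤ q ^ (-(1 / (h : ℝ))) := by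
  rw [← Real.rpow_neg_one]
  refine Real.rpow_le_rpow_of_exponent_le hq (neg_le_neg ?_)
  rw [one_div]
  exact Nat.cast_inv_le_one h

lemma inv_le_fullDensity (hh : h ≠ 0) (hq : 1 ≤ q) : q⁻¹ ≤ fullDensity h q := by
  have hq0 : 0 < q := by positivity
  rw [← sub_nonneg, fullDensity_sub_inv hh hq0]
  exact mul_nonneg (sub_nonneg.2 (inv_le_rpow_neg_one_div hq)) (fullDensity_nonneg hh hq0)

lemma rpow_neg_mul_fullDensity_le (hh : h ≠ 0) (hq : 1 ≤ q) (σ : ℝ) :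
    q ^ (-σ) * fullDensity h q ≤ h * q ^ (-(1 + σ)) := by
  have hq0 : 0 < q := by positivity
  calc q ^ (-σ) * fullDensity h q ≤ q ^ (-σ) * (h * q⁻¹) := by
        gcongr
        exact fullDensity_le hh hq
    _ = h * q ^ (-(1 + σ)) := by
        rw [neg_add_rev, Real.rpow_add hq0, Real.rpow_neg_one]
        ring

variable {P : Type*} {N : P → ℕ}

lemma IsDiscreteNorm.gammah_eq_tprod (hN : IsDiscreteNorm N) (hh : h ≠ 0) :
    gammah N h = ∏' p, freeFactor h (primeNorm N p ^ (-(1 / (h : ℝ)))) := by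
  refine tprod_congr fun p => ?_
  change 1 + (primeNorm N p - primeNorm N p ^ (1 / (h : ℝ))) /
    (primeNorm N p ^ 2 * (primeNorm N p ^ (1 / (h : ℝ)) - 1)) = _
  have hq := hN.primeNorm_pos p
  have hroot : 1 < primeNorm N p ^ (1 / (h : ℝ)) :=
    Real.one_lt_rpow (one_lt_two.trans_le (hN.two_le_primeNorm p))
      (one_div_pos.2 (Nat.cast_pos.2 (Nat.pos_of_ne_zero hh)))
  rw [freeFactor_eq hh, rpow_neg_one_div_pow hh hq.le, Real.rpow_neg hq.le]
  · have hsub := (sub_pos.2 hroot).ne'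
    have := (sub_pos.2 (inv_lt_one_of_one_lt₀ hroot)).ne'
    field_simp
  · rw [Real.rpow_neg hq.le]
    exact (inv_lt_one_of_one_lt₀ hroot).ne

lemma elemNorm_primeProduct (N : P → ℕ) (D : Finset P) :
    elemNorm N (primeProduct D) = ∏ p ∈ D, primeNorm N p := by
  have hsupport : (primeProduct D).support = D := by
    ext p
    simp [primeProduct_apply]
  rw [elemNorm_eq_prod, hsupport]
  exact Finset.prod_congr rfl fun p hp => by rw [primeProduct_apply, if_pos hp, pow_one]

namespace IsDiscreteNorm

variable {y : ℝ} (hN : IsDiscreteNorm N)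
include hN

lemma mul_prod_markedFactor_div_freeFactor_eq (κ : ℝ) (hh : h ≠ 0) (D : Finset P) :
    κ * (y / elemNorm N (primeProduct D)) *
      ((∏' p, freeFactor h (primeNorm N p ^ (-(1 / (h : ℝ))))) *
        ∏ p ∈ D, (markedFactor h (primeNorm N p ^ (-(1 / (h : ℝ)))) /
          freeFactor h (primeNorm N p ^ (-(1 / (h : ℝ)))))) =
      κ * gammah N h * y * ∏ p ∈ D, fullDensity h (primeNorm N p) := by
  simp only [← inv_mul_markedFactor_div_freeFactor hh (hN.primeNorm_pos _)]
  rw [hN.gammah_eq_tprod hh, elemNorm_primeProduct, Finset.prod_mul_distrib,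
    Finset.prod_inv_distrib]
  ring

lemma prod_markedFactor_div_freeFactor_nonneg (h : ℕ) (D : Finset P) (σ : ℝ) :
    0 ≤ ∏ p ∈ D,
      (markedFactor h (primeNorm N p ^ (-σ)) / freeFactor h (primeNorm N p ^ (-σ))) :=
  Finset.prod_nonneg fun p _ =>
    markedFactor_div_freeFactor_nonneg (Real.rpow_nonneg (hN.primeNorm_pos p).le _)

lemma prod_markedFactor_div_freeFactor_le (h : ℕ) (D : Finset P) {σ : ℝ} (hσ : 0 ≤ σ) :
    ∏ p ∈ D, (markedFactor h (primeNorm N p ^ (-σ)) / freeFactor h (primeNorm N p ^ (-σ))) ≤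
      (h : ℝ) ^ D.card := by
  have ht (p : P) : 0 ≤ primeNorm N p ^ (-σ) := Real.rpow_nonneg (hN.primeNorm_pos p).le _
  rw [← Finset.prod_const]
  exact Finset.prod_le_prod (fun p _ => markedFactor_div_freeFactor_nonneg (ht p)) fun p _ =>
    markedFactor_div_freeFactor_le (ht p)
      (Real.rpow_le_one_of_one_le_of_nonpos (hN.one_le_primeNorm p) (neg_nonpos.2 hσ))

lemma div_elemNorm_primeProduct_rpow (D : Finset P) (hy : 0 ≤ y) (σ : ℝ) :
    (y / elemNorm N (primeProduct D)) ^ σ = y ^ σ * ∏ p ∈ D, primeNorm N p ^ (-σ) := by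
  have hnorm (p : P) : 0 ≤ primeNorm N p := (hN.primeNorm_pos p).le
  rw [Real.div_rpow hy (hN.elemNorm_pos _).le, elemNorm_primeProduct,
    ← Real.finsetProd_rpow _ _ fun p _ => hnorm p, div_eq_mul_inv, ← Finset.prod_inv_distrib]
  simp only [Real.rpow_neg (hnorm _)]

end IsDiscreteNorm

theorem UniformStar.exists_abs_fullCount_pow_sub_prod_fullDensity_le {κ τ K : ℝ}
    (H : UniformStar N κ τ K) (hh : h ≠ 0) (hτ : h < τ * (h + 1)) :
    ∃ C, 0 ≤ C ∧ ∀ D : Finset P, ∀ y, 0 < y →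
      |fullCount h N D (y ^ h) - κ * gammah N h * y * ∏ p ∈ D, fullDensity h (primeNorm N p)| ≤
        C * (h : ℝ) ^ D.card * (y ^ τ * ∏ p ∈ D, primeNorm N p ^ (-τ)) := by
  have hK := H.constant_nonneg
  refine ⟨K * |∏' p, freeFactor h (primeNorm N p ^ (-(τ / (h : ℝ))))|, by positivity,
    fun D y hy => ?_⟩
  rw [← H.mul_prod_markedFactor_div_freeFactor_eq κ hh, ← H.div_elemNorm_primeProduct_rpow D hy.le]
  have hquot : 0 ≤ y / elemNorm N (primeProduct D) := div_nonneg hy.le (H.elemNorm_pos _).le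
  calc _ ≤ _ := H.abs_fullCount_pow_sub_le hh hτ D hy
    _ ≤ K * (y / elemNorm N (primeProduct D)) ^ τ *
        (|∏' p, freeFactor h (primeNorm N p ^ (-(τ / (h : ℝ))))| * (h : ℝ) ^ D.card) := by
        have := H.exponent_pos
        have := H.prod_markedFactor_div_freeFactor_nonneg h D (τ / (h : ℝ))
        gcongr
        · exact le_abs_self _
        · exact H.prod_markedFactor_div_freeFactor_le h D (by positivity)
    _ = _ := by ring

end LocalDensity

/-! ### Sums of local densities -/

section DensitySums

variable {ι : Type*} {ν f g w : ι → ℝ} {ε : ℝ}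

lemma MertensWeight.exists_of_summable_sub {C : ℝ} (W : MertensWeight ν f C) (hg : ∀ i, 0 ≤ g i)
    (hs : Summable fun i => (g i - f i) * Real.log (ν i)) : ∃ C', MertensWeight ν g C' := by
  refine ⟨C + ∑' i, |(g i - f i) * Real.log (ν i)|, W.finiteSublevels, W.two_le, hg,
    fun x hx => ?_⟩
  have hsplit : mertensError ν g x =
      mertensError ν f x + ∑ i ∈ sublevel ν x, (g i - f i) * Real.log (ν i) := by
    simp only [mertensError, partialSum, sub_mul, Finset.sum_sub_distrib]
    ring
  rw [hsplit]
  exact (abs_add_le _ _).trans (add_le_add (W.abs_error_le x hx)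
    ((Finset.abs_sum_le_sum_abs _ _).trans (hs.abs.sum_le_tsum _ fun i _ => abs_nonneg _)))

lemma FiniteSublevels.abs_partialSum_sub_tsum_le (hν : FiniteSublevels ν) (hν1 : ∀ i, 1 ≤ ν i)
    (hw : ∀ i, 0 ≤ w i) (hε : 0 ≤ ε) (hs : Summable fun i => w i * ν i ^ ε) {z : ℝ} (hz : 0 < z) :
    |partialSum ν w z - ∑' i, w i| ≤ (∑' i, w i * ν i ^ ε) * z ^ (-ε) := by
  have hwν (i : ι) : 0 ≤ w i * ν i ^ ε :=
    mul_nonneg (hw i) (Real.rpow_nonneg (zero_le_one.trans (hν1 i)) _)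
  have hsw : Summable w := .of_nonneg_of_le hw
    (fun i => le_mul_of_one_le_right (hw i) (Real.one_le_rpow (hν1 i) hε)) hs
  have htail (i : ι) (hi : i ∉ sublevel ν z) : w i ≤ w i * ν i ^ ε * z ^ (-ε) := by
    rw [hν.mem_sublevel, not_le] at hi
    rw [mul_assoc]
    refine le_mul_of_one_le_right (hw i) ?_
    rw [Real.rpow_neg hz.le, ← div_eq_mul_inv, one_le_div (by positivity)]
    gcongr
  rw [← hsw.sum_add_tsum_compl (s := sublevel ν z), partialSum, sub_add_cancel_left, abs_neg,
    abs_of_nonneg (tsum_nonneg fun i : ↥(sublevel ν z : Set ι)ᶜ => hw i), ← tsum_mul_right]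
  calc _ ≤ ∑' i : ↥(sublevel ν z : Set ι)ᶜ, w i * ν i ^ ε * z ^ (-ε) :=
        (hsw.subtype _).tsum_le_tsum (fun i => htail i i.2) ((hs.mul_right _).subtype _)
    _ ≤ _ := (hs.mul_right _).tsum_subtype_le _ _ fun i => mul_nonneg (hwν i) (by positivity)

lemma FiniteSublevels.isBigO_partialSum_sqrt_sub_tsum (hν : FiniteSublevels ν)
    (hν1 : ∀ i, 1 ≤ ν i) (hw : ∀ i, 0 ≤ w i) (hε : 0 < ε) (hs : Summable fun i => w i * ν i ^ ε) :
    (fun y => partialSum ν w √y - ∑' i, w i) =O[atTop] fun y => (Real.log y)⁻¹ := by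
  have hpow : (fun z : ℝ => z ^ (-ε)) =O[atTop] fun z => (Real.log z)⁻¹ := by
    refine IsBigO.congr' ((isLittleO_log_rpow_atTop hε).isBigO.inv_rev ?_) ?_ .rfl
    · filter_upwards [eventually_gt_atTop 1] with z hz hz0
      exact absurd hz0 (Real.log_pos hz).ne'
    · filter_upwards [eventually_ge_atTop 0] with z hz
      exact (Real.rpow_neg hz ε).symm
  have hlog : (fun y => (Real.log √y)⁻¹) =O[atTop] fun y => (Real.log y)⁻¹ := by
    refine ((isBigO_refl (fun y => (Real.log y)⁻¹) atTop).const_mul_left 2).congr' ?_ .rfl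
    filter_upwards [eventually_ge_atTop 0] with y hy
    rw [Real.log_sqrt hy, inv_div, div_eq_mul_inv]
  refine IsBigO.trans ?_ hlog
  refine IsBigO.comp_tendsto (f := fun z => partialSum ν w z - ∑' i, w i)
    (g := fun z => (Real.log z)⁻¹) (IsBigO.trans ?_ hpow) Real.tendsto_sqrt_atTop
  refine IsBigO.of_bound (∑' i, w i * ν i ^ ε) ?_
  filter_upwards [eventually_gt_atTop 0] with z hz
  rw [Real.norm_eq_abs, Real.norm_of_nonneg (by positivity)]
  exact hν.abs_partialSum_sub_tsum_le hν1 hw hε.le hs hz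

end DensitySums

section FullDensitySums

variable {P : Type*} {N : P → ℕ} {h : ℕ} {A : ℝ}

lemma IsDiscreteNorm.LhSum_eq_tsum (hN : IsDiscreteNorm N) (h : ℕ) (r : ℝ) :
    LhSum N h r =
      ∑' p, primeNorm N p ^ (-(r / (h : ℝ) - 1)) * fullDensity h (primeNorm N p) := by
  refine tsum_congr fun p => ?_
  rw [Real.rpow_neg (hN.primeNorm_pos p).le, fullDensity, ← one_div, one_div_mul_one_div]
  rfl

lemma IsDiscreteNorm.tendsto_partialSum_inv_sub_loglog (hN : IsDiscreteNorm N)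
    (hA : IsMertens N A) :
    Tendsto (fun t => partialSum (primeNorm N) (fun p => (primeNorm N p)⁻¹) t -
      Real.log (Real.log t)) atTop (𝓝 A) := by
  refine hA.congr fun x => ?_
  congr 1
  rw [partialSum, ← finsum_mem_coe_finset]
  refine finsum_mem_congr (Set.ext fun p => ?_) fun p _ => one_div _
  rw [Finset.mem_coe, hN.finiteSublevels_primeNorm.mem_sublevel]
  rfl

namespace UniformStar

variable {κ τ K σ : ℝ} (H : UniformStar N κ τ K)
include H

lemma summable_rpow_neg_mul_fullDensity (hh : h ≠ 0) (hσ : 0 < σ) :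
    Summable fun p => primeNorm N p ^ (-σ) * fullDensity h (primeNorm N p) :=
  .of_nonneg_of_le
    (fun p => mul_nonneg (Real.rpow_nonneg (H.primeNorm_pos p).le _)
      (fullDensity_nonneg hh (H.primeNorm_pos p)))
    (fun p => rpow_neg_mul_fullDensity_le hh (H.one_le_primeNorm p) σ)
    ((H.summable_primeNorm_rpow_neg (lt_add_of_pos_right 1 hσ)).mul_left (h : ℝ))

lemma summable_fullDensity_sq_mul_rpow (hh : h ≠ 0) (hσ : σ < 1) :
    Summable fun p => fullDensity h (primeNorm N p) ^ 2 * primeNorm N p ^ σ := by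
  refine .of_nonneg_of_le (fun p => mul_nonneg (sq_nonneg _)
    (Real.rpow_nonneg (H.primeNorm_pos p).le _)) (fun p => ?_)
    ((H.summable_rpow_neg_mul_fullDensity hh (sub_pos.2 hσ)).mul_left (h : ℝ))
  have hq := H.primeNorm_pos p
  have hf := fullDensity_nonneg hh hq
  calc _ ≤ fullDensity h (primeNorm N p) * (h * (primeNorm N p)⁻¹) * primeNorm N p ^ σ := by
        rw [sq]
        gcongr
        exact fullDensity_le hh (H.one_le_primeNorm p)
    _ = _ := by
        rw [neg_sub, Real.rpow_sub_one hq.ne']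
        ring

lemma hasSum_fullDensity_sub_inv (hh : h ≠ 0) :
    HasSum (fun p => fullDensity h (primeNorm N p) - (primeNorm N p)⁻¹)
      (LhSum N h (h + 1) - LhSum N h (2 * h)) := by
  have hh0 : (0 : ℝ) < h := Nat.cast_pos.2 (Nat.pos_of_ne_zero hh)
  have hroot : ((h : ℝ) + 1) / h - 1 = 1 / h := by field_simp; ring
  have hinv : 2 * (h : ℝ) / h - 1 = 1 := by field_simp; ring
  rw [H.LhSum_eq_tsum, H.LhSum_eq_tsum, hroot, hinv]
  have hpoint (p : P) : fullDensity h (primeNorm N p) - (primeNorm N p)⁻¹ =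
      primeNorm N p ^ (-(1 / (h : ℝ))) * fullDensity h (primeNorm N p) -
        primeNorm N p ^ (-1 : ℝ) * fullDensity h (primeNorm N p) := by
    rw [fullDensity_sub_inv hh (H.primeNorm_pos p), Real.rpow_neg_one, sub_mul]
  simp only [hpoint]
  exact (H.summable_rpow_neg_mul_fullDensity hh (one_div_pos.2 hh0)).hasSum.sub
    (H.summable_rpow_neg_mul_fullDensity hh one_pos).hasSum

lemma summable_fullDensity_sub_inv_mul_log (hh : h ≠ 0) :
    Summable fun p => (fullDensity h (primeNorm N p) - (primeNorm N p)⁻¹) *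
      Real.log (primeNorm N p) := by
  have : (0 : ℝ) < h := Nat.cast_pos.2 (Nat.pos_of_ne_zero hh)
  set ε : ℝ := 1 / (2 * h) with hε
  have hε0 : 0 < ε := by positivity
  refine .of_nonneg_of_le (fun p => mul_nonneg
    (sub_nonneg.2 (inv_le_fullDensity hh (H.one_le_primeNorm p))) (H.log_primeNorm_pos p).le)
    (fun p => ?_) ((H.summable_rpow_neg_mul_fullDensity hh hε0).mul_left ε⁻¹)
  have hq := H.primeNorm_pos p
  have hf := fullDensity_nonneg hh hq
  rw [fullDensity_sub_inv hh hq]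
  calc _ ≤ primeNorm N p ^ (-(1 / (h : ℝ))) * fullDensity h (primeNorm N p) *
          (primeNorm N p ^ ε / ε) := by
        have := (H.log_primeNorm_pos p).le
        gcongr
        · exact sub_le_self _ (by positivity)
        · exact Real.log_le_rpow_div hq.le hε0
    _ = ε⁻¹ * (primeNorm N p ^ (-(1 / (h : ℝ)) + ε) * fullDensity h (primeNorm N p)) := by
        rw [Real.rpow_add hq]
        ring
    _ = _ := by
        congr 3
        rw [hε]
        field_simp
        ring

lemma exists_mertensWeight_fullDensity (hh : h ≠ 0) :
    ∃ C, MertensWeight (primeNorm N) (fun p => fullDensity h (primeNorm N p)) C := by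
  obtain ⟨C, W⟩ := H.exists_mertensWeight_inv
  exact W.exists_of_summable_sub (fun p => fullDensity_nonneg hh (H.primeNorm_pos p))
    (H.summable_fullDensity_sub_inv_mul_log hh)

lemma tendsto_partialSum_fullDensity_sub_loglog (hh : h ≠ 0) (hA : IsMertens N A) :
    Tendsto (fun t => partialSum (primeNorm N) (fun p => fullDensity h (primeNorm N p)) t -
      Real.log (Real.log t)) atTop (𝓝 (D1const N h A + Real.log h)) := by
  have hsum := H.hasSum_fullDensity_sub_inv hh
  have hlim := (H.tendsto_partialSum_inv_sub_loglog hA).add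
    (H.finiteSublevels_primeNorm.tendsto_partialSum hsum.summable)
  rw [hsum.tsum_eq] at hlim
  convert hlim using 2 with t
  · simp only [partialSum, Finset.sum_sub_distrib]
    ring
  · rw [D1const]
    ring

end UniformStar

end FullDensitySums

/-! ### The second moment -/

section SupportPairSum

variable {ι : Type*} {ν f : ι → ℝ} {y : ℝ}

/-- The variant of `pairSum` in which a repeated index counts once: a pair `(i, i)` contributes
`f i` under the condition `ν i ≤ y`. -/
def supportPairSum (ν f : ι → ℝ) (y : ℝ) : ℝ :=
  ∑ i ∈ sublevel ν y, ∑ j ∈ sublevel ν y,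
    if ∏ r ∈ {i, j}, ν r ≤ y then ∏ r ∈ {i, j}, f r else 0

lemma supportPairSum_nonneg (hf : ∀ i, 0 ≤ f i) (y : ℝ) : 0 ≤ supportPairSum ν f y := by
  refine Finset.sum_nonneg fun i _ => Finset.sum_nonneg fun j _ => ?_
  split_ifs
  exacts [Finset.prod_nonneg fun r _ => hf r, le_rfl]

lemma FiniteSublevels.partialSum_sq_sqrt_eq_sum (hν : FiniteSublevels ν) (hν1 : ∀ i, 1 ≤ ν i)
    (hy : 0 ≤ y) :
    partialSum ν (fun i => f i ^ 2) √y =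
      ∑ i ∈ sublevel ν y, if ν i * ν i ≤ y then f i ^ 2 else 0 := by
  rw [← Finset.sum_filter, partialSum]
  refine Finset.sum_congr (Finset.ext fun i => ?_) fun _ _ => rfl
  have hi0 : 0 ≤ ν i := zero_le_one.trans (hν1 i)
  rw [Finset.mem_filter, hν.mem_sublevel, hν.mem_sublevel, Real.le_sqrt hi0 hy, sq,
    and_iff_right_of_imp (le_mul_of_one_le_left hi0 (hν1 i)).trans]

lemma FiniteSublevels.supportPairSum_eq (hν : FiniteSublevels ν) (hν1 : ∀ i, 1 ≤ ν i)
    (hy : 0 ≤ y) :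
    supportPairSum ν f y =
      partialSum ν f y + pairSum ν f y - partialSum ν (fun i => f i ^ 2) √y := by
  have hpoint (i j : ι) (hi : ν i ≤ y) :
      (if ∏ r ∈ {i, j}, ν r ≤ y then ∏ r ∈ {i, j}, f r else 0) =
        (if ν i * ν j ≤ y then f i * f j else 0) +
          if i = j then f i - (if ν i * ν i ≤ y then f i ^ 2 else 0) else 0 := by
    by_cases hij : i = j
    · subst hij
      simp [hi, sq]
    · simp [hij, Finset.prod_pair hij]
  have hrow (i : ι) (hi : i ∈ sublevel ν y) :
      (∑ j ∈ sublevel ν y, if ∏ r ∈ {i, j}, ν r ≤ y then ∏ r ∈ {i, j}, f r else 0) =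
        (∑ j ∈ sublevel ν y, if ν i * ν j ≤ y then f i * f j else 0) +
          (f i - if ν i * ν i ≤ y then f i ^ 2 else 0) := by
    simp only [hpoint i _ (hν.mem_sublevel.1 hi), Finset.sum_add_distrib, Finset.sum_ite_eq, hi,
      if_true]
  rw [supportPairSum, Finset.sum_congr rfl hrow, Finset.sum_add_distrib, Finset.sum_sub_distrib,
    hν.partialSum_sq_sqrt_eq_sum hν1 hy, pairSum, partialSum]
  ring

lemma FiniteSublevels.supportPairSum_le (hν : FiniteSublevels ν) (hν1 : ∀ i, 1 ≤ ν i)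
    (hy : 0 ≤ y) : supportPairSum ν f y ≤ partialSum ν f y + pairSum ν f y := by
  rw [hν.supportPairSum_eq hν1 hy]
  exact sub_le_self _ (partialSum_nonneg fun i => sq_nonneg _)

lemma MertensWeight.isBigO_supportPairSum_sub {C D ε : ℝ} (W : MertensWeight ν f C)
    (hD : Tendsto (fun t => partialSum ν f t - Real.log (Real.log t)) atTop (𝓝 D)) (hε : 0 < ε)
    (hs : Summable fun i => f i ^ 2 * ν i ^ ε) :
    (fun y => supportPairSum ν f y - ((Real.log (Real.log y) + D) ^ 2 +
        (Real.log (Real.log y) + D) - Real.pi ^ 2 / 6 - ∑' i, f i ^ 2))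
      =O[atTop] fun y => Real.log (Real.log y) / Real.log y := by
  have hsingle := (W.isBigO_partialSum_sub_loglog_sub hD).trans isBigO_inv_log_loglog_div_log
  have hdiag := (W.finiteSublevels.isBigO_partialSum_sqrt_sub_tsum W.one_le
    (fun i => sq_nonneg (f i)) hε hs).trans isBigO_inv_log_loglog_div_log
  refine ((hsingle.add (W.isBigO_pairSum_sub hD)).sub hdiag).congr' ?_ .rfl
  filter_upwards [eventually_ge_atTop 0] with y hy
  rw [W.finiteSublevels.supportPairSum_eq W.one_le hy]
  ring

end SupportPairSum

section SecondMoment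

variable {P : Type*} {N : P → ℕ} {h : ℕ} {y : ℝ}

/-- The second moment `∑ ω(m)²` over the `h`-full elements of norm at most `x`. -/
def omegaSecondMoment (h : ℕ) (N : P → ℕ) : ℝ → ℝ :=
  partialSum (elemNorm N) fun m => if HFull h m then (omegaM m : ℝ) ^ 2 else 0

namespace IsDiscreteNorm

variable (hN : IsDiscreteNorm N)
include hN

lemma finsum_omegaM_sq_eq (h : ℕ) (x : ℝ) :
    ∑ᶠ m ∈ {m : P →₀ ℕ | HFull h m ∧ (Nm N m : ℝ) ≤ x}, (omegaM m : ℝ) ^ 2 =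
      omegaSecondMoment h N x := by
  rw [omegaSecondMoment, partialSum, ← Finset.sum_filter, ← finsum_mem_coe_finset]
  refine finsum_mem_congr (Set.ext fun m => ?_) fun _ _ => rfl
  rw [Finset.mem_coe, Finset.mem_filter, hN.finiteSublevels.mem_sublevel, and_comm]
  rfl

lemma omegaM_sq_eq_sum (hy : 0 ≤ y) (hh : h ≠ 0) {m : P →₀ ℕ} (hm : HFull h m)
    (hmy : elemNorm N m ≤ y ^ h) :
    (omegaM m : ℝ) ^ 2 = ∑ p ∈ sublevel (primeNorm N) y, ∑ q ∈ sublevel (primeNorm N) y,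
      if {p, q} ⊆ m.support then 1 else 0 := by
  have hsupport : m.support ⊆ sublevel (primeNorm N) y := fun p hp => by
    have hle := hN.elemNorm_primeProduct_le_of_hFull hy hh hm (Finset.singleton_subset_iff.2 hp) hmy
    rw [elemNorm_primeProduct, Finset.prod_singleton] at hle
    exact hN.finiteSublevels_primeNorm.mem_sublevel.2 hle
  have hcard : (omegaM m : ℝ) =
      ∑ p ∈ sublevel (primeNorm N) y, if p ∈ m.support then 1 else 0 := by
    rw [Finset.sum_ite_mem, Finset.inter_eq_right.2 hsupport, Finset.sum_const, nsmul_one]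
    rfl
  rw [sq, hcard, Finset.sum_mul_sum]
  simp only [Finset.insert_subset_iff, Finset.singleton_subset_iff, ite_and, ite_mul, one_mul,
    zero_mul]

lemma omegaSecondMoment_pow_eq_sum (hy : 0 ≤ y) (hh : h ≠ 0) :
    omegaSecondMoment h N (y ^ h) = ∑ p ∈ sublevel (primeNorm N) y,
      ∑ q ∈ sublevel (primeNorm N) y, fullCount h N {p, q} (y ^ h) := by
  simp only [fullCount, partialSum, omegaSecondMoment]
  rw [Finset.sum_congr rfl fun p _ => Finset.sum_comm, Finset.sum_comm]
  refine Finset.sum_congr rfl fun m hm => ?_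
  split_ifs with hfull
  · simp only [hfull, true_and]
    exact hN.omegaM_sq_eq_sum hy hh hfull (hN.finiteSublevels.mem_sublevel.1 hm)
  · simp [hfull]

end IsDiscreteNorm

namespace UniformStar

variable {κ τ K A : ℝ} (H : UniformStar N κ τ K)
include H

lemma exists_abs_fullCount_pow_sub_ite_le (hh : h ≠ 0) (hτ : h < τ * (h + 1)) :
    ∃ C, ∀ D : Finset P, D.card ≤ 2 → ∀ y, 0 < y →
      |fullCount h N D (y ^ h) - κ * gammah N h * y *
        (if ∏ p ∈ D, primeNorm N p ≤ y then ∏ p ∈ D, fullDensity h (primeNorm N p) else 0)| ≤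
      C * y ^ τ * (if ∏ p ∈ D, primeNorm N p ≤ y then ∏ p ∈ D, primeNorm N p ^ (-τ) else 0) := by
  obtain ⟨C, hC, hle⟩ := H.exists_abs_fullCount_pow_sub_prod_fullDensity_le hh hτ
  refine ⟨C * (h : ℝ) ^ 2, fun D hcard y hy => ?_⟩
  split_ifs with hD
  · have hprod : 0 ≤ ∏ p ∈ D, primeNorm N p ^ (-τ) :=
      Finset.prod_nonneg fun p _ => Real.rpow_nonneg (H.primeNorm_pos p).le _
    have hh1 : (1 : ℝ) ≤ h := Nat.one_le_cast.2 (Nat.one_le_iff_ne_zero.2 hh)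
    calc _ ≤ C * (h : ℝ) ^ D.card * (y ^ τ * ∏ p ∈ D, primeNorm N p ^ (-τ)) := hle D y hy
      _ ≤ C * (h : ℝ) ^ 2 * (y ^ τ * ∏ p ∈ D, primeNorm N p ^ (-τ)) := by gcongr
      _ = _ := by ring
  · rw [← elemNorm_primeProduct, not_le] at hD
    simp [H.fullCount_pow_eq_zero hy.le hh hD]

lemma exists_abs_omegaSecondMoment_pow_sub_le (hh : h ≠ 0) (hτ : h < τ * (h + 1)) :
    ∃ C, ∀ y, 0 < y →
      |omegaSecondMoment h N (y ^ h) - κ * gammah N h * y *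
        supportPairSum (primeNorm N) (fun p => fullDensity h (primeNorm N p)) y| ≤
      C * y ^ τ * supportPairSum (primeNorm N) (fun p => primeNorm N p ^ (-τ)) y := by
  obtain ⟨C, hle⟩ := H.exists_abs_fullCount_pow_sub_ite_le hh hτ
  refine ⟨C, fun y hy => ?_⟩
  rw [H.omegaSecondMoment_pow_eq_sum hy.le hh]
  simp only [supportPairSum, Finset.mul_sum, ← Finset.sum_sub_distrib]
  refine (Finset.abs_sum_le_sum_abs _ _).trans (Finset.sum_le_sum fun p _ => ?_)
  exact (Finset.abs_sum_le_sum_abs _ _).trans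
    (Finset.sum_le_sum fun q _ => hle {p, q} Finset.card_le_two y hy)

lemma isBigO_rpow_mul_supportPairSum_rpow_neg :
    (fun y => y ^ τ * supportPairSum (primeNorm N) (fun p => primeNorm N p ^ (-τ)) y)
      =O[atTop] fun y => y * (Real.log (Real.log y) / Real.log y) := by
  obtain ⟨C, -, hle⟩ :=
    H.exists_partialSum_primeNorm_rpow_neg_le H.exponent_pos.le H.exponent_lt_one
  have hpow (p : P) : 0 ≤ primeNorm N p ^ (-τ) := Real.rpow_nonneg (H.primeNorm_pos p).le _
  have hpartial : partialSum (primeNorm N) (fun p => primeNorm N p ^ (-τ)) =O[atTop]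
      fun y => y ^ (1 - τ) * (Real.log (Real.log y) / Real.log y) := by
    refine IsBigO.trans (IsBigO.of_bound C ?_)
      ((isBigO_refl (fun y : ℝ => y ^ (1 - τ)) atTop).mul isBigO_inv_log_loglog_div_log)
    filter_upwards [eventually_gt_atTop 1] with y hy
    have := Real.log_pos hy
    rw [Real.norm_of_nonneg (partialSum_nonneg hpow), Real.norm_of_nonneg (by positivity)]
    exact hle y hy
  have hsupport : supportPairSum (primeNorm N) (fun p => primeNorm N p ^ (-τ)) =O[atTop]
      fun y => y ^ (1 - τ) * (Real.log (Real.log y) / Real.log y) := by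
    refine IsBigO.trans (IsBigO.of_norm_eventuallyLE ?_)
      (hpartial.add (H.isBigO_pairSum_rpow_neg H.exponent_pos.le H.exponent_lt_one))
    filter_upwards [eventually_ge_atTop 0] with y hy
    rw [Real.norm_of_nonneg (supportPairSum_nonneg hpow y)]
    exact H.finiteSublevels_primeNorm.supportPairSum_le H.one_le_primeNorm hy
  refine ((isBigO_refl (fun y : ℝ => y ^ τ) atTop).mul hsupport).congr' .rfl ?_
  filter_upwards [eventually_gt_atTop 0] with y hy
  rw [← mul_assoc, ← Real.rpow_add hy, add_sub_cancel, Real.rpow_one]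

lemma isBigO_omegaSecondMoment_pow_sub (hh : h ≠ 0) (hτ : h < τ * (h + 1)) (hA : IsMertens N A) :
    (fun y => omegaSecondMoment h N (y ^ h) - κ * gammah N h * y *
        ((Real.log (Real.log y) + (D1const N h A + Real.log h)) ^ 2 +
          (Real.log (Real.log y) + (D1const N h A + Real.log h)) - Real.pi ^ 2 / 6 -
          ∑' p, fullDensity h (primeNorm N p) ^ 2))
      =O[atTop] fun y => y * (Real.log (Real.log y) / Real.log y) := by
  obtain ⟨C, hle⟩ := H.exists_abs_omegaSecondMoment_pow_sub_le hh hτ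
  obtain ⟨M, W⟩ := H.exists_mertensWeight_fullDensity hh
  have hcount : (fun y => omegaSecondMoment h N (y ^ h) - κ * gammah N h * y *
        supportPairSum (primeNorm N) (fun p => fullDensity h (primeNorm N p)) y)
      =O[atTop] fun y => y * (Real.log (Real.log y) / Real.log y) := by
    refine IsBigO.trans (IsBigO.of_norm_eventuallyLE ?_)
      (H.isBigO_rpow_mul_supportPairSum_rpow_neg.const_mul_left C)
    filter_upwards [eventually_gt_atTop 0] with y hy
    exact (hle y hy).trans_eq (mul_assoc _ _ _)
  have hmain := W.isBigO_supportPairSum_sub (H.tendsto_partialSum_fullDensity_sub_loglog hh hA)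
    one_half_pos (H.summable_fullDensity_sq_mul_rpow hh one_half_lt_one)
  refine (hcount.add (((isBigO_refl (fun y : ℝ => y) atTop).mul hmain).const_mul_left
    (κ * gammah N h))).congr_left fun y => ?_
  ring

lemma isBigO_omegaSecondMoment_sub (hh : h ≠ 0) (hτ : h < τ * (h + 1)) (hA : IsMertens N A) :
    (fun x => omegaSecondMoment h N x - κ * gammah N h * x ^ (1 / (h : ℝ)) *
        ((Real.log (Real.log x) + D1const N h A) ^ 2 +
          (Real.log (Real.log x) + D1const N h A) - Real.pi ^ 2 / 6 -
          ∑' p, fullDensity h (primeNorm N p) ^ 2))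
      =O[atTop] fun x => x ^ (1 / (h : ℝ)) * (Real.log (Real.log x) / Real.log x) := by
  have hroot : 0 < 1 / (h : ℝ) := one_div_pos.2 (Nat.cast_pos.2 (Nat.pos_of_ne_zero hh))
  have hpow := (H.isBigO_omegaSecondMoment_pow_sub hh hτ hA).comp_tendsto
    (tendsto_rpow_atTop hroot)
  have herror := (isBigO_refl (fun x : ℝ => x ^ (1 / (h : ℝ))) atTop).mul
    (isBigO_loglog_rpow_div_log_rpow hroot.ne')
  refine (hpow.trans herror).congr' ?_ .rfl
  filter_upwards [eventually_gt_atTop 1] with x hx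
  have hroot_pow : (x ^ (1 / (h : ℝ))) ^ h = x := by
    rw [one_div, Real.rpow_inv_natCast_pow (zero_le_one.trans hx.le) hh]
  have hloglog : Real.log (Real.log (x ^ (1 / (h : ℝ)))) + (D1const N h A + Real.log h) =
      Real.log (Real.log x) + D1const N h A := by
    rw [loglog_rpow hroot.ne' hx, one_div, Real.log_inv]
    ring
  rw [Function.comp_apply, hroot_pow, hloglog]

end UniformStar

lemma D2const_eq (N : P → ℕ) (h : ℕ) (A : ℝ) :
    D2const N h A = D1const N h A ^ 2 + D1const N h A - Real.pi ^ 2 / 6 -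
      ∑' p, fullDensity h (primeNorm N p) ^ 2 := by
  rw [D2const, Bconst, neg_div, ← sub_eq_add_neg]
  rfl

lemma StarCond.exists_uniformStar_of_lt_mul {κ θ : ℝ} (hstar : StarCond N κ θ)
    (hN : ∀ p, 2 ≤ N p) (h : ℕ) :
    ∃ τ K : ℝ, h < τ * (h + 1) ∧ UniformStar N κ τ K := by
  have hh : 0 < (h : ℝ) + 1 := by positivity
  obtain ⟨τ, hmax, hτ1⟩ :=
    exists_between (max_lt hstar.2.2.1 ((div_lt_one hh).2 (lt_add_one (h : ℝ))))
  obtain ⟨hθτ, hτ⟩ := max_lt_iff.1 hmax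
  obtain ⟨K, H⟩ := hstar.exists_uniformStar hN hθτ.le (hstar.2.1.trans_lt hθτ) hτ1
  exact ⟨τ, K, (div_lt_iff₀ hh).1 hτ, H⟩

end SecondMoment

theorem second_moment_omega_hfull_general {P : Type*} (N : P → ℕ)
    (hN : ∀ p, 2 ≤ N p) (κ θ : ℝ) (hstar : StarCond N κ θ)
    (A : ℝ) (hA : IsMertens N A) (h : ℕ) (hh : h ≠ 0) :
    (fun x : ℝ =>
        (∑ᶠ m ∈ {m : P →₀ ℕ | HFull h m ∧ (Nm N m : ℝ) ≤ x}, (omegaM m : ℝ) ^ 2)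
          - κ * gammah N h * (x ^ (1 / (h : ℝ)) * Real.log (Real.log x) ^ 2)
          - κ * gammah N h * (2 * D1const N h A + 1) *
              (x ^ (1 / (h : ℝ)) * Real.log (Real.log x))
          - κ * gammah N h * D2const N h A * x ^ (1 / (h : ℝ)))
      =O[atTop]
        fun x : ℝ => x ^ (1 / (h : ℝ)) * Real.log (Real.log x) / Real.log x := by
  obtain ⟨τ, K, hτ, H⟩ := hstar.exists_uniformStar_of_lt_mul hN h
  refine (H.isBigO_omegaSecondMoment_sub hh hτ hA).congr (fun x => ?_)
    fun x => (mul_div_assoc _ _ _).symm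
  rw [H.finsum_omegaM_sq_eq, D2const_eq]
  ring

/-- Second moment of `ω` over `h`-full elements. -/
theorem second_moment_omega_hfull {P : Type*} [Countable P] (N : P → ℕ)
    (hN : ∀ p, 2 ≤ N p) (κ θ : ℝ) (hstar : StarCond N κ θ)
    (A : ℝ) (hA : IsMertens N A) (h : ℕ) (hh : 2 ≤ h) :
    (fun x : ℝ =>
        (∑ᶠ m ∈ {m : P →₀ ℕ | HFull h m ∧ (Nm N m : ℝ) ≤ x}, (omegaM m : ℝ) ^ 2)
          - κ * gammah N h * (x ^ (1 / (h : ℝ)) * Real.log (Real.log x) ^ 2)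
          - κ * gammah N h * (2 * D1const N h A + 1) *
              (x ^ (1 / (h : ℝ)) * Real.log (Real.log x))
          - κ * gammah N h * D2const N h A * x ^ (1 / (h : ℝ)))
      =O[atTop]
        fun x : ℝ => x ^ (1 / (h : ℝ)) * Real.log (Real.log x) / Real.log x :=
  second_moment_omega_hfull_general N hN κ θ hstar A hA h (two_pos.trans_le hh).ne'
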